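/- arXiv:1512.03021 — 3 statements merged into one kernel-verified Lean document; each statement's English description precedes it below -/
import Mathlib

section
/- Let G be a finitely generated, finitely presented Hopfian group that admits a golden system, and let H be a finitely generated group with G ≈ₜ H. Then G and H are isomorphic. -/
/-!
Replace ordered partitions by colourings, so that refining a partition means pairing its colouring
with another one.

Let `(𝔤, ς)` be a golden system of `G`. As `G` is finitely presented, the relations among `𝔤`
follow from a finite set `R` of relators (`IsFinitelyPresentedGroup.exists_relators`). Refine `ς`
to a colouring `c` that isolates `1`, the generators and all points visited by the relators. If
`(𝔨, d)` in a group `K` has the same two-sided configurations, let `S` be the class of `d`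
corresponding to `{1}`. Comparing left and right multiplication at `1` shows that `S` is invariant
under conjugation, and following the relators shows that each of them stabilizes `S`; so every
relation among `𝔤`, read in `K`, stabilizes `S` (`color_relator_iff`). The golden containment then
holds for all words representing `x`, not only the chosen one, so words trivial in `K` are trivial
in `G`: there is a surjection `θ : K → G` with `θ 𝔨 = 𝔤`, and `y, z * y ∈ S` forces `θ z = 1`
(`determinesQuotient_of_relators`). The golden property quantifies over groups in one universe,
which is enough because finitely generated groups are countable (`golden_transfer`).

Apply this to `K = H` to get `θ : H → G`. If `a ≠ 1` lies in its kernel, colour `H` by `c ∘ θ`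
together with a bit telling whether a point is `1`, and realize the same configurations in `G`.
Forgetting the bit leaves the configurations of `c`, so there is a surjection `θ' : G → G`, which is
injective by the Hopf property; hence its class corresponding to `1` has a single element. But that
class contains points with either value of the bit, corresponding to `1` and `a`.
-/


open scoped Pointwise

universe u v

/-- `g` is an (ordered, finite) generating tuple of the group `G`. -/
def IsGenerating {G : Type*} [Group G] {n : ℕ} (g : Fin n → G) : Prop :=
  Subgroup.closure (Set.range g) = ⊤

/-- `E` is an (ordered, finite) partition of the underlying set of `G`:
every element lies in exactly one cell. -/
def IsPartition {G : Type*} {m : ℕ} (E : Fin m → Set G) : Prop :=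
  ∀ x : G, ∃! i : Fin m, x ∈ E i

/-- The type in which two-sided configurations corresponding to a generating tuple of
length `n` and a partition of length `m` live: a tuple `(c₀, (c₁,…,cₙ), (c_{n+1},…,c_{2n}))`. -/
abbrev TwoSidedConfig (n m : ℕ) := Fin m × (Fin n → Fin m) × (Fin n → Fin m)

/-- The two-sided configuration set `Con_t(𝔤, ℰ)`. -/
def TwoSidedConfigSet {G : Type*} [Group G] {n m : ℕ} (g : Fin n → G) (E : Fin m → Set G) :
    Set (TwoSidedConfig n m) :=
  {c | ∃ x ∈ E c.1, ∀ i : Fin n, g i * x ∈ E (c.2.1 i) ∧ x * g i ∈ E (c.2.2 i)}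

/-- `Con_t(G)`: the collection of all two-sided configuration sets of `G`,
over all configuration pairs `(𝔤, ℰ)`. -/
def TwoSidedConfigSets (G : Type*) [Group G] : Set (Σ n m : ℕ, Set (TwoSidedConfig n m)) :=
  {S | ∃ g : Fin S.1 → G, ∃ E : Fin S.2.1 → Set G,
    IsGenerating g ∧ IsPartition E ∧ S.2.2 = TwoSidedConfigSet g E}

/-- Two-sided configuration equivalence `G ≈ₜ H`. -/
def ConfigEqT (G : Type*) (H : Type*) [Group G] [Group H] : Prop :=
  TwoSidedConfigSets G = TwoSidedConfigSets H

/-- The (one-sided) configuration set `Con(𝔤, ℰ)`. -/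
def ConfigSet {G : Type*} [Group G] {n m : ℕ} (g : Fin n → G) (E : Fin m → Set G) :
    Set (Fin m × (Fin n → Fin m)) :=
  {c | ∃ x ∈ E c.1, ∀ k : Fin n, g k * x ∈ E (c.2 k)}

/-- `Con(G)`: the collection of all configuration sets of `G`. -/
def ConfigSets (G : Type*) [Group G] : Set (Σ n m : ℕ, Set (Fin m × (Fin n → Fin m))) :=
  {S | ∃ g : Fin S.1 → G, ∃ E : Fin S.2.1 → Set G,
    IsGenerating g ∧ IsPartition E ∧ S.2.2 = ConfigSet g E}

/-- Configuration equivalence `G ≈ H`. -/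
def ConfigEq (G : Type*) (H : Type*) [Group G] [Group H] : Prop :=
  ConfigSets G = ConfigSets H

/-- The word `W(J, ρ; 𝔤) = ∏_{i=1}^{p} g_{J(i)}^{ρ(i)}` associated to a representative
pair `(J, ρ)` (here `ρ i = true` encodes exponent `1`, and `ρ i = false` exponent `-1`). -/
def word {G : Type*} [Group G] {n p : ℕ} (g : Fin n → G) (J : Fin p → Fin n)
    (ρ : Fin p → Bool) : G :=
  ((List.finRange p).map (fun i => if ρ i then g (J i) else (g (J i))⁻¹)).prod

/-- The configuration pair `(𝔤, q⁻¹(ℰ))` is golden w.r.t. the normal subgroup `N`,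
where `ℰ` is a partition of `G ⧸ N` containing the singleton `{1}`. -/
def IsGoldenConfigPair {G : Type u} [Group G] (N : Subgroup G) [N.Normal] {n m : ℕ}
    (g : Fin n → G) (E : Fin m → Set (G ⧸ N)) : Prop :=
  IsGenerating g ∧ IsPartition E ∧
  ∃ i₀ : Fin m, E i₀ = ({1} : Set (G ⧸ N)) ∧
  ∃ (p : G → ℕ) (J : ∀ x : G, Fin (p x) → Fin n) (ρ : ∀ x : G, Fin (p x) → Bool),
    (∀ x : G, x ∉ N →
      QuotientGroup.mk' N x = word (fun i => QuotientGroup.mk' N (g i)) (J x) (ρ x)) ∧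
    (∀ (H : Type v) [Group H] (h : Fin n → H) (F : Fin m → Set H),
      IsGenerating h → IsPartition F →
      TwoSidedConfigSet g (fun i => QuotientGroup.mk' N ⁻¹' E i) = TwoSidedConfigSet h F →
      ∀ x : G, x ∉ N → word h (J x) (ρ x) • F i₀ ∩ F i₀ = ∅)

/-- `G` has a golden configuration pair w.r.t. the normal subgroup `N`. -/
def HasGoldenConfigPairWrt (G : Type u) [Group G] (N : Subgroup G) [N.Normal] : Prop :=
  ∃ (n m : ℕ) (g : Fin n → G) (E : Fin m → Set (G ⧸ N)), IsGoldenConfigPair.{u, v} N g E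

/-- `G` has a golden configuration pair (i.e. one w.r.t. the trivial subgroup). -/
def HasGoldenConfigPair (G : Type u) [Group G] : Prop :=
  HasGoldenConfigPairWrt.{u, v} G ⊥

/-- `(𝔤, ς, {(J_g, ρ_g)})` is a golden system w.r.t. the normal subgroup `N`.  The
finite-range function `ς` on `G ⧸ N` is encoded as a surjection onto `Fin m`; the
`ς`-partition of `G` is then `v ↦ (ς ∘ q)⁻¹(v)`, `v : Fin m`. -/
def IsGoldenSystem {G : Type u} [Group G] (N : Subgroup G) [N.Normal] {n m : ℕ}
    (g : Fin n → G) (ς : G ⧸ N → Fin m)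
    {p : G → ℕ} (J : ∀ x : G, Fin (p x) → Fin n) (ρ : ∀ x : G, Fin (p x) → Bool) : Prop :=
  IsGenerating g ∧ Function.Surjective ς ∧
  (∀ x : G, x ∉ N →
    QuotientGroup.mk' N x = word (fun i => QuotientGroup.mk' N (g i)) (J x) (ρ x)) ∧
  ((fun x : G => ς (QuotientGroup.mk' N x)) ⁻¹' {ς (1 : G ⧸ N)} = (N : Set G)) ∧
  (∀ (H : Type v) [Group H] (h : Fin n → H) (F : Fin m → Set H),
    IsGenerating h → IsPartition F →
    TwoSidedConfigSet g (fun v => (fun x : G => ς (QuotientGroup.mk' N x)) ⁻¹' {v})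
      = TwoSidedConfigSet h F →
    ∀ x : G, x ∉ N →
      word h (J x) (ρ x) • F (ς (1 : G ⧸ N)) ⊆ F (ς (QuotientGroup.mk' N x)))

/-- `G` admits a golden system w.r.t. the normal subgroup `N`. -/
def HasGoldenSystemWrt (G : Type u) [Group G] (N : Subgroup G) [N.Normal] : Prop :=
  ∃ (n m : ℕ) (g : Fin n → G) (ς : G ⧸ N → Fin m) (p : G → ℕ)
    (J : ∀ x : G, Fin (p x) → Fin n) (ρ : ∀ x : G, Fin (p x) → Bool),
    IsGoldenSystem.{u, v} N g ς J ρ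

/-- `G` admits a golden system (i.e. one w.r.t. the trivial subgroup). -/
def HasGoldenSystem (G : Type u) [Group G] : Prop :=
  HasGoldenSystemWrt.{u, v} G ⊥

/-- A group is Hopfian if every surjective endomorphism is an automorphism. -/
def IsHopfianGroup (G : Type*) [Group G] : Prop :=
  ∀ f : G →* G, Function.Surjective f → Function.Bijective f

/-- A group is finitely presented if it is presented by finitely many generators
and finitely many relators. -/
def IsFinitelyPresentedGroup (G : Type*) [Group G] : Prop :=
  ∃ (n : ℕ) (rels : Set (FreeGroup (Fin n))),
    rels.Finite ∧ Nonempty (PresentedGroup rels ≃* G)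

/-- A group is polycyclic if it has a subnormal series with cyclic factors. -/
def IsPolycyclic (G : Type*) [Group G] : Prop :=
  ∃ (k : ℕ) (c : Fin (k + 1) → Subgroup G),
    c 0 = ⊥ ∧ c (Fin.last k) = ⊤ ∧
    ∀ i : Fin k, c i.castSucc ≤ c i.succ ∧
      ∃ hn : ((c i.castSucc).subgroupOf (c i.succ)).Normal,
        letI := hn
        IsCyclic ((c i.succ) ⧸ (c i.castSucc).subgroupOf (c i.succ))

/-- An FC-group: every conjugacy class is finite. -/
def IsFCGroup (G : Type*) [Group G] : Prop :=
  ∀ g : G, {h : G | IsConj g h}.Finite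

/-- A normal subset: `hM = Mh` for all `h`. -/
def IsNormalSubset {H : Type*} [Group H] (M : Set H) : Prop :=
  ∀ h : H, (fun x => h * x) '' M = (fun x => x * h) '' M

/-- `E'` is a refinement of the partition `E`. -/
def IsRefinement {G : Type*} {r s : ℕ} (E' : Fin s → Set G) (E : Fin r → Set G) : Prop :=
  ∀ l : Fin s, ∃ k : Fin r, E' l ⊆ E k

/-- The pairs `(ℰ', ℰ)` and `(ℱ', ℱ)` are similar. -/
def SimilarPairs {G H : Type*} {r s : ℕ} (E : Fin r → Set G) (E' : Fin s → Set G)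
    (F : Fin r → Set H) (F' : Fin s → Set H) : Prop :=
  ∀ k : Fin r, {l : Fin s | (E k ∩ E' l).Nonempty} = {l : Fin s | (F k ∩ F' l).Nonempty}

universe w

/-! ### Colourings and their configurations -/

/-- The two-sided configurations of a colouring `c`, that is, `Con_t` for the partition of the
group into the fibres of `c`, with an arbitrary type of colours in place of `Fin m`. -/
def colorConfigs {G α : Type*} [Group G] {n : ℕ} (g : Fin n → G) (c : G → α) :
    Set (α × (Fin n → α) × (Fin n → α)) :=
  Set.range fun x => (c x, fun i => c (g i * x), fun i => c (x * g i))

theorem twoSidedConfigSet_fibers {G : Type*} [Group G] {n m : ℕ} (g : Fin n → G)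
    (c : G → Fin m) :
    TwoSidedConfigSet g (fun v => c ⁻¹' {v}) = colorConfigs g c := by
  ext ⟨a, b, b'⟩
  constructor
  · rintro ⟨x, hx, h⟩
    refine ⟨x, ?_⟩
    simp only [Prod.mk.injEq]
    exact ⟨hx, funext fun i => (h i).1, funext fun i => (h i).2⟩
  · rintro ⟨x, hx⟩
    simp only [Prod.mk.injEq] at hx
    obtain ⟨rfl, rfl, rfl⟩ := hx
    exact ⟨x, rfl, fun i => ⟨rfl, rfl⟩⟩

theorem isPartition_fibers {G : Type*} {m : ℕ} (c : G → Fin m) :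
    IsPartition (fun v => c ⁻¹' {v}) :=
  fun x => ⟨c x, rfl, fun _ h => h.symm⟩

theorem IsPartition.exists_color {G : Type*} {m : ℕ} {E : Fin m → Set G} (hE : IsPartition E) :
    ∃ c : G → Fin m, E = fun v => c ⁻¹' {v} := by
  choose c hc hc' using hE
  refine ⟨c, funext fun v => Set.ext fun x => ⟨fun h => (hc' x v h).symm, ?_⟩⟩
  rintro rfl
  exact hc x

theorem colorConfigs_comp {G α β : Type*} [Group G] {n : ℕ} (g : Fin n → G) (c : G → α)
    (f : α → β) :
    colorConfigs g (f ∘ c) =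
      (fun t : α × (Fin n → α) × (Fin n → α) => (f t.1, f ∘ t.2.1, f ∘ t.2.2)) ''
        colorConfigs g c := by
  rw [colorConfigs, colorConfigs, ← Set.range_comp]
  rfl

/-- Merging colours: configuration equality descends to coarser colourings. -/
theorem colorConfigs_comp_eq {G H α β : Type*} [Group G] [Group H] {n : ℕ} {g : Fin n → G}
    {h : Fin n → H} {c : G → α} {d : H → α} (f : α → β)
    (hcd : colorConfigs g c = colorConfigs h d) :
    colorConfigs g (f ∘ c) = colorConfigs h (f ∘ d) := by
  rw [colorConfigs_comp, colorConfigs_comp, hcd]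

/-- Pulling a colouring back along a surjective homomorphism does not change its
configurations. -/
theorem colorConfigs_pullback {G H α : Type*} [Group G] [Group H] {n : ℕ} (f : H →* G)
    (hf : Function.Surjective f) (h : Fin n → H) (c : G → α) :
    colorConfigs h (c ∘ f) = colorConfigs (fun i => f (h i)) c := by
  rw [colorConfigs, colorConfigs,
    ← hf.range_comp fun x => (c x, fun i => c (f (h i) * x), fun i => c (x * f (h i)))]
  simp [Function.comp_def]

theorem ConfigEqT.exists_color {G H α : Type*} [Group G] [Group H] [Finite α]
    (heq : ConfigEqT G H) {n : ℕ} {g : Fin n → G} (hg : IsGenerating g) (c : G → α) :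
    ∃ (h : Fin n → H) (d : H → α), IsGenerating h ∧ colorConfigs g c = colorConfigs h d := by
  obtain ⟨m, ⟨e⟩⟩ := Finite.exists_equiv_fin α
  have hmem : (⟨n, m, colorConfigs g (e ∘ c)⟩ : Σ n m : ℕ, Set (TwoSidedConfig n m)) ∈
      TwoSidedConfigSets G :=
    ⟨g, _, hg, isPartition_fibers (e ∘ c), (twoSidedConfigSet_fibers g (e ∘ c)).symm⟩
  rw [heq] at hmem
  obtain ⟨h, F, hh, hF, hhF⟩ := hmem
  dsimp only at h F hh hF hhF
  obtain ⟨d, rfl⟩ := hF.exists_color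
  rw [twoSidedConfigSet_fibers] at hhF
  refine ⟨h, e.symm ∘ d, hh, ?_⟩
  rw [← colorConfigs_comp_eq e.symm hhF]
  congr 1
  ext x
  simp

/-! ### Words, generators and relators -/

theorem map_word {G H : Type*} [Group G] [Group H] (f : G →* H) {n p : ℕ} (g : Fin n → G)
    (J : Fin p → Fin n) (ρ : Fin p → Bool) : f (word g J ρ) = word (fun i => f (g i)) J ρ := by
  rw [word, word, map_list_prod, List.map_map]
  congr 2
  ext i
  by_cases h : ρ i <;> simp [h]

theorem IsGenerating.lift_surjective {G : Type*} [Group G] {n : ℕ} {g : Fin n → G}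
    (hg : IsGenerating g) : Function.Surjective (FreeGroup.lift g) := by
  rw [← MonoidHom.range_eq_top, FreeGroup.range_lift_eq_closure]
  exact hg

theorem IsGenerating.map {G H : Type*} [Group G] [Group H] {n : ℕ} {g : Fin n → G}
    (hg : IsGenerating g) (f : G →* H) (hf : Function.Surjective f) :
    IsGenerating (fun i => f (g i)) := by
  have : Set.range (fun i => f (g i)) = f '' Set.range g := Set.range_comp f g
  rw [IsGenerating, this, ← MonoidHom.map_closure, hg]
  exact Subgroup.map_top_of_surjective f hf

/-- Finite presentability does not depend on the finite generating tuple. -/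
theorem IsFinitelyPresentedGroup.exists_relators {G : Type*} [Group G]
    (hG : IsFinitelyPresentedGroup G) {n : ℕ} {g : Fin n → G} (hg : IsGenerating g) :
    ∃ R : Set (FreeGroup (Fin n)), R.Finite ∧
      (FreeGroup.lift g).ker = Subgroup.normalClosure R := by
  obtain ⟨m, S, hS, ⟨e⟩⟩ := hG
  set φ : FreeGroup (Fin m) →* G := e.toMonoidHom.comp (PresentedGroup.mk S) with hφdef
  have hφ : Function.Surjective φ := e.surjective.comp (PresentedGroup.mk_surjective S)
  have hker : ∀ w, φ w = 1 ↔ w ∈ Subgroup.normalClosure S := by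
    intro w
    have : φ w = e (PresentedGroup.mk S w) := rfl
    rw [this, EmbeddingLike.map_eq_one_iff]
    exact QuotientGroup.eq_one_iff w
  set ψ := FreeGroup.lift g with hψdef
  have hψ : Function.Surjective ψ := hg.lift_surjective
  -- Translations between the two free groups over `G`.
  choose a ha using fun i : Fin m => hψ (φ (FreeGroup.of i))
  choose b hb using fun i : Fin n => hφ (ψ (FreeGroup.of i))
  set u := FreeGroup.lift a with hu
  set v := FreeGroup.lift b with hv
  have hψu : ∀ w, ψ (u w) = φ w := by
    have : ψ.comp u = φ := by
      ext i
      simp [hu, ha]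
    exact fun w => DFunLike.congr_fun this w
  have hφv : ∀ w, φ (v w) = ψ w := by
    have : φ.comp v = ψ := by
      ext i
      simp [hv, hb]
    exact fun w => DFunLike.congr_fun this w
  refine ⟨u '' S ∪ Set.range fun i => (FreeGroup.of i)⁻¹ * u (v (FreeGroup.of i)),
    (hS.image _).union (Set.finite_range _), le_antisymm ?_ ?_⟩
  · set N := Subgroup.normalClosure
      (u '' S ∪ Set.range fun i => (FreeGroup.of i)⁻¹ * u (v (FreeGroup.of i))) with hN
    have h1 : Subgroup.normalClosure S ≤ N.comap u := Subgroup.normalClosure_le_normal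
      fun s hs => Subgroup.subset_normalClosure (Or.inl ⟨s, hs, rfl⟩)
    have h2 : (QuotientGroup.mk' N).comp (u.comp v) = QuotientGroup.mk' N := by
      ext i
      have hmem : (FreeGroup.of i)⁻¹ * u (v (FreeGroup.of i)) ∈ N :=
        Subgroup.subset_normalClosure (Or.inr ⟨i, rfl⟩)
      exact (QuotientGroup.eq.2 hmem).symm
    intro w hw
    have h3 : v w ∈ Subgroup.normalClosure S := by
      rw [← hker, hφv]
      exact hw
    have h4 : QuotientGroup.mk' N (u (v w)) = QuotientGroup.mk' N w := DFunLike.congr_fun h2 w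
    rw [← QuotientGroup.eq_one_iff (N := N)]
    exact h4.symm.trans ((QuotientGroup.eq_one_iff _).2 (h1 h3))
  · refine Subgroup.normalClosure_le_normal ?_
    rintro _ (⟨s, hs, rfl⟩ | ⟨i, rfl⟩)
    · exact (hψu s).trans ((hker s).2 (Subgroup.subset_normalClosure hs))
    · change ψ _ = 1
      rw [map_mul, hψu, hφv, map_inv, inv_mul_cancel]

/-! ### Colours separating a finite set of elements -/

section Separated

variable {G K α : Type*} [Group G] [Group K] {n : ℕ} {g : Fin n → G} {k : Fin n → K}
  {c : G → α} {d : K → α}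

/-- If the colours of `t` and `g i * t` are attained only there, then left multiplication by
`k i` carries one of the corresponding colour classes exactly onto the other. -/
theorem color_left_iff (hcd : colorConfigs g c = colorConfigs k d) {t : G} (i : Fin n)
    (ht : ∀ x, c x = c t → x = t) (hit : ∀ x, c x = c (g i * t) → x = g i * t) (y : K) :
    d (k i * y) = c (g i * t) ↔ d y = c t := by
  have hy : (d y, (fun i => d (k i * y)), fun i => d (y * k i)) ∈ colorConfigs g c :=
    hcd ▸ ⟨y, rfl⟩
  obtain ⟨x, hx⟩ := hy
  simp only [Prod.mk.injEq] at hx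
  rw [← hx.1, ← congrFun hx.2.1 i]
  refine ⟨fun h => ?_, fun h => by rw [ht x h]⟩
  rw [mul_left_cancel (hit _ h)]

theorem color_right_iff (hcd : colorConfigs g c = colorConfigs k d) {t : G} (i : Fin n)
    (ht : ∀ x, c x = c t → x = t) (hti : ∀ x, c x = c (t * g i) → x = t * g i) (y : K) :
    d (y * k i) = c (t * g i) ↔ d y = c t := by
  have hy : (d y, (fun i => d (k i * y)), fun i => d (y * k i)) ∈ colorConfigs g c :=
    hcd ▸ ⟨y, rfl⟩
  obtain ⟨x, hx⟩ := hy
  simp only [Prod.mk.injEq] at hx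
  rw [← hx.1, ← congrFun hx.2.2 i]
  refine ⟨fun h => ?_, fun h => by rw [ht x h]⟩
  rw [mul_right_cancel (hti _ h)]

/-- If the colours along the path in `G` spelled by the word `L`, starting at `1`, are all
isolated, then the same path in `K` carries the class of `1` onto the class of its endpoint. -/
theorem color_list_iff (hcd : colorConfigs g c = colorConfigs k d) (y : K)
    (L : List (Fin n × Bool))
    (hL : ∀ L', L' <:+ L → ∀ x, c x = c (FreeGroup.lift g (FreeGroup.mk L')) →
      x = FreeGroup.lift g (FreeGroup.mk L')) :
    d (FreeGroup.lift k (FreeGroup.mk L) * y) = c (FreeGroup.lift g (FreeGroup.mk L)) ↔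
      d y = c 1 := by
  induction L with
  | nil => simp [FreeGroup.lift_mk]
  | cons a L ih =>
    have ih := ih fun L' h => hL L' (h.trans (List.suffix_cons a L))
    rw [← ih]
    have h0 := hL L (List.suffix_cons a L)
    have h1 := hL (a :: L) List.suffix_rfl
    obtain ⟨i, b⟩ := a
    simp only [FreeGroup.lift_mk, List.map_cons, List.prod_cons] at h0 h1 ⊢
    generalize (List.map (fun x : Fin n × Bool => bif x.2 then g x.1 else (g x.1)⁻¹) L).prod = t
      at h0 h1 ⊢
    generalize (List.map (fun x : Fin n × Bool => bif x.2 then k x.1 else (k x.1)⁻¹) L).prod = z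
    cases b with
    | true =>
      simp only [cond_true, mul_assoc] at h1 ⊢
      exact color_left_iff hcd i h0 h1 _
    | false =>
      simp only [cond_false, mul_assoc] at h1 ⊢
      have := color_left_iff hcd i h1 (by simpa using h0) ((k i)⁻¹ * (z * y))
      simpa using this.symm

/-- When `1` and all `g i` have isolated colours, the class corresponding to `1` is invariant
under conjugation. -/
theorem color_conj_iff (hcd : colorConfigs g c = colorConfigs k d) (hk : IsGenerating k)
    (h1 : ∀ x, c x = c 1 → x = 1) (hgen : ∀ i x, c x = c (g i) → x = g i) (z y : K) :
    d (z * y * z⁻¹) = c 1 ↔ d y = c 1 := by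
  have hz : z ∈ Subgroup.closure (Set.range k) := by
    rw [show Subgroup.closure (Set.range k) = ⊤ from hk]
    trivial
  induction hz using Subgroup.closure_induction generalizing y with
  | mem _ h =>
    obtain ⟨i, rfl⟩ := h
    have hl := color_left_iff (t := 1) hcd i h1 (by simpa using hgen i) y
    have hr := color_right_iff (t := 1) hcd i h1 (by simpa using hgen i) (k i * y * (k i)⁻¹)
    simp only [mul_one, one_mul, inv_mul_cancel_right] at hl hr
    rw [← hl, hr]
  | one => simp
  | mul a b _ _ iha ihb =>
    have := (iha (b * y * b⁻¹)).trans (ihb y)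
    simpa [mul_assoc] using this
  | inv a _ ih =>
    have := (ih (a⁻¹ * y * a⁻¹⁻¹)).symm
    simpa [mul_assoc] using this

/-- If in addition all initial paths of the relators `R` have isolated colours, every
consequence of `R` fixes the class corresponding to `1`. -/
theorem color_relator_iff (hcd : colorConfigs g c = colorConfigs k d) (hk : IsGenerating k)
    (h1 : ∀ x, c x = c 1 → x = 1) (hgen : ∀ i x, c x = c (g i) → x = g i)
    {R : Set (FreeGroup (Fin n))} (hR : ∀ r ∈ R, FreeGroup.lift g r = 1)
    (hsuf : ∀ r ∈ R, ∀ L, L <:+ r.toWord → ∀ x, c x = c (FreeGroup.lift g (FreeGroup.mk L)) →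
      x = FreeGroup.lift g (FreeGroup.mk L))
    {w : FreeGroup (Fin n)} (hw : w ∈ Subgroup.normalClosure R) (y : K) :
    d (FreeGroup.lift k w * y) = c 1 ↔ d y = c 1 := by
  induction hw using Subgroup.closure_induction generalizing y with
  | mem _ h =>
    obtain ⟨r, hr, h⟩ := Group.mem_conjugatesOfSet_iff.1 h
    obtain ⟨u, rfl⟩ := isConj_iff.1 h
    have h2 := fun y => color_list_iff hcd y r.toWord (hsuf r hr)
    simp only [FreeGroup.mk_toWord, hR r hr] at h2
    have hconj := color_conj_iff hcd hk h1 hgen (FreeGroup.lift k u)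
    have h3 := (hconj (FreeGroup.lift k r *
      ((FreeGroup.lift k u)⁻¹ * y * FreeGroup.lift k u))).trans
        ((h2 _).trans (hconj ((FreeGroup.lift k u)⁻¹ * y * FreeGroup.lift k u)).symm)
    simpa [mul_assoc] using h3
  | one => simp
  | mul a b _ _ iha ihb => rw [map_mul, mul_assoc, iha, ihb]
  | inv a _ ih =>
    rw [← ih (FreeGroup.lift k a⁻¹ * y)]
    simp

end Separated

/-! ### Consequences of a golden system -/

/-- A colouring `c` of `G` together with a generating tuple `g` *determines the quotient `G`* if
every configuration pair of a group `K` with the same two-sided configurations induces a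
surjection `K → G` taking generators to generators, whose kernel contains every element `z`
sending some point of the class corresponding to the colour of `1` to a point of that class.
Groups `K` in a fixed universe are considered. -/
def DeterminesQuotient.{x, y, z} {G : Type x} {α : Type y} [Group G] {n : ℕ} (g : Fin n → G)
    (c : G → α) : Prop :=
  ∀ (K : Type z) [Group K] (k : Fin n → K) (d : K → α), IsGenerating k →
    colorConfigs g c = colorConfigs k d →
    ∃ θ : K →* G, Function.Surjective θ ∧ (∀ i, θ (k i) = g i) ∧
      ∀ y z, d y = c 1 → d (z * y) = c 1 → θ z = 1

/-- The containment required of a golden system for groups in one universe holds for groups in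
every universe, since the groups concerned are countable. -/
theorem golden_transfer.{x} {G : Type u} [Group G] {n m : ℕ} {g : Fin n → G}
    {ς : G ⧸ (⊥ : Subgroup G) → Fin m} {p : G → ℕ} {J : ∀ x : G, Fin (p x) → Fin n}
    {ρ : ∀ x : G, Fin (p x) → Bool} (hgold : IsGoldenSystem.{u, v} ⊥ g ς J ρ)
    (K : Type x) [Group K] (k : Fin n → K) (d : K → Fin m) (hk : IsGenerating k)
    (hcd : colorConfigs g (fun x => ς x) = colorConfigs k d)
    (t : G) (ht : t ≠ 1) (y : K) (hy : d y = ς 1) :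
    d (word k (J t) (ρ t) * y) = ς t := by
  obtain ⟨-, -, -, -, h⟩ := hgold
  have : Countable (FreeGroup (Fin n)) :=
    FreeGroup.toWord_injective.countable
  have : Countable K := hk.lift_surjective.countable
  let e : Shrink.{v} K ≃* K := Shrink.mulEquiv
  have hcd' : colorConfigs g (fun x => ς x) =
      colorConfigs (fun i => e.symm (k i)) (d ∘ e.toMonoidHom) := by
    rw [hcd, colorConfigs_pullback e.toMonoidHom e.surjective]
    simp
  have key := h (Shrink.{v} K) (fun i => e.symm (k i)) (fun v => (d ∘ e.toMonoidHom) ⁻¹' {v})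
    (hk.map e.symm.toMonoidHom e.symm.surjective) (isPartition_fibers _)
    ((twoSidedConfigSet_fibers g fun x => ς x).trans
      (hcd'.trans (twoSidedConfigSet_fibers _ _).symm))
    t (by simpa using ht)
  have hmem : e.symm y ∈ (d ∘ e.toMonoidHom) ⁻¹' {ς 1} := by
    change d (e (e.symm y)) = ς 1
    rw [e.apply_symm_apply, hy]
  have h2 : d (e (word (fun i => e.symm (k i)) (J t) (ρ t) * e.symm y)) = ς t :=
    key (Set.smul_mem_smul_set hmem)
  have h3 := map_word e.toMonoidHom (fun i => e.symm (k i)) (J t) (ρ t)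
  simp only [MulEquiv.toMonoidHom_eq_coe, MonoidHom.coe_coe, MulEquiv.apply_symm_apply] at h3
  rwa [map_mul, h3, e.apply_symm_apply] at h2

/-- The core argument. The relators fix the class `S` of points coloured like `1`; the words `W t`
move it into the class of `t`. Together these say that a word `w` sends `S` into the class of its
value in `G`, so words trivial in `K` are trivial in `G`. -/
theorem determinesQuotient_of_relators.{x} {G : Type u} [Group G] {n : ℕ} {g : Fin n → G}
    {α γ : Type*} {c : G → α × γ} (h1 : ∀ x, c x = c 1 → x = 1)
    (hgen : ∀ i x, c x = c (g i) → x = g i) {R : Set (FreeGroup (Fin n))}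
    (hR : (FreeGroup.lift g).ker = Subgroup.normalClosure R)
    (hsuf : ∀ r ∈ R, ∀ L, L <:+ r.toWord → ∀ x, c x = c (FreeGroup.lift g (FreeGroup.mk L)) →
      x = FreeGroup.lift g (FreeGroup.mk L))
    (hg : IsGenerating g) (hone : ∀ t, (c t).1 = (c 1).1 → t = 1)
    {W : G → FreeGroup (Fin n)} (hW : ∀ t, t ≠ 1 → FreeGroup.lift g (W t) = t)
    (hgold : ∀ (K : Type x) [Group K] (k : Fin n → K) (d : K → α), IsGenerating k →
      colorConfigs g (Prod.fst ∘ c) = colorConfigs k d → ∀ t, t ≠ 1 → ∀ y, d y = (c 1).1 →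
        d (FreeGroup.lift k (W t) * y) = (c t).1) :
    DeterminesQuotient.{_, _, x} g c := by
  intro K _ k d hk hcd
  have hrel : ∀ w, FreeGroup.lift g w = 1 → ∀ y, d (FreeGroup.lift k w * y) = c 1 ↔ d y = c 1 := by
    intro w hw y
    refine color_relator_iff hcd hk h1 hgen (fun r hr => ?_) hsuf (R := R) (hR ▸ hw) y
    have : r ∈ (FreeGroup.lift g).ker := hR ▸ Subgroup.subset_normalClosure hr
    exact this
  have hact : ∀ w y, d y = c 1 → (d (FreeGroup.lift k w * y)).1 = (c (FreeGroup.lift g w)).1 := by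
    intro w y hy
    by_cases hw : FreeGroup.lift g w = 1
    · rw [hw, (hrel w hw y).2 hy]
    · have hr : FreeGroup.lift g ((W (FreeGroup.lift g w))⁻¹ * w) = 1 := by
        rw [map_mul, map_inv, hW _ hw, inv_mul_cancel]
      have := hgold K k (Prod.fst ∘ d) hk (colorConfigs_comp_eq Prod.fst hcd) _ hw
        _ (congrArg Prod.fst ((hrel _ hr y).2 hy))
      simpa [mul_assoc] using this
  obtain ⟨y₀, hy₀⟩ : ∃ y, d y = c 1 := by
    have : (c 1, (fun i => c (g i * 1)), fun i => c (1 * g i)) ∈ colorConfigs k d := hcd ▸ ⟨1, rfl⟩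
    obtain ⟨y, hy⟩ := this
    exact ⟨y, congrArg Prod.fst hy⟩
  have hker : (FreeGroup.lift k).ker ≤ (FreeGroup.lift g).ker := by
    intro w hw
    have h := hact w y₀ hy₀
    rw [MonoidHom.mem_ker.1 hw, one_mul, hy₀] at h
    exact hone _ h.symm
  let θ : K →* G := (FreeGroup.lift k).liftOfSurjective hk.lift_surjective
    ⟨FreeGroup.lift g, hker⟩
  have hθ : ∀ w, θ (FreeGroup.lift k w) = FreeGroup.lift g w := fun w =>
    MonoidHom.liftOfRightInverse_comp_apply _ _ _ ⟨FreeGroup.lift g, hker⟩ w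
  refine ⟨θ, fun t => ?_, fun i => ?_, fun y z hy hzy => ?_⟩
  · obtain ⟨w, rfl⟩ := hg.lift_surjective t
    exact ⟨_, hθ w⟩
  · simpa using hθ (FreeGroup.of i)
  · obtain ⟨w, rfl⟩ := hk.lift_surjective z
    rw [hθ]
    have h := hact w y hy
    rw [hzy] at h
    exact hone _ h.symm

/-- For a finitely presented group with a golden system, refining the `ς`-partition by finitely
many singletons (the points visited by the relators, the generators, and `1`) yields a colouring
which determines the quotient `G`. -/
theorem exists_determinesQuotient.{x, y} {G : Type u} [Group G]
    (hGfp : IsFinitelyPresentedGroup G) (hgold : HasGoldenSystem.{u, v} G) :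
    ∃ (n : ℕ) (g : Fin n → G) (α : Type u) (c : G → α), Finite α ∧ IsGenerating g ∧
      DeterminesQuotient.{u, u, x} g c ∧ DeterminesQuotient.{u, u, y} g c := by
  classical
  obtain ⟨n, m, g, ς, p, J, ρ, hgold⟩ := hgold
  have hg : IsGenerating g := hgold.1
  have hrep : ∀ t : G, t ≠ 1 → t = word g (J t) (ρ t) := by
    intro t ht
    have h := hgold.2.2.1 t (by simpa using ht)
    rw [← map_word (QuotientGroup.mk' ⊥)] at h
    have h' := QuotientGroup.eq.1 h
    rw [Subgroup.mem_bot] at h'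
    exact (inv_mul_eq_one.1 h')
  have hone : ∀ t : G, ς t = ς 1 → t = 1 := by
    intro t ht
    have h := Set.ext_iff.1 hgold.2.2.2.1 t
    exact Subgroup.mem_bot.1 (h.1 ht)
  obtain ⟨R, hRfin, hR⟩ := hGfp.exists_relators hg
  let T : Set G := insert 1 (Set.range g ∪
    ⋃ r ∈ R, (fun L => FreeGroup.lift g (FreeGroup.mk L)) '' {L | L <:+ r.toWord})
  have hTfin : T.Finite := by
    refine ((Set.finite_range g).union (hRfin.biUnion fun r _ => Set.Finite.image _ ?_)).insert 1
    refine (List.finite_toSet r.toWord.tails).subset fun L hL => ?_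
    exact (List.mem_tails _ _).2 hL
  have : Finite T := hTfin
  let c : G → Fin m × Option T := fun x => (ς x, if h : x ∈ T then some ⟨x, h⟩ else none)
  have hc : ∀ t ∈ T, ∀ x, c x = c t → x = t := by
    intro t ht x hx
    have hx2 := congrArg Prod.snd hx
    simp only [c, dif_pos ht] at hx2
    split_ifs at hx2 with h
    · simpa using hx2
  have h1 : ∀ x, c x = c 1 → x = 1 := hc 1 (Set.mem_insert _ _)
  have hgen : ∀ i x, c x = c (g i) → x = g i := fun i =>
    hc _ (Set.mem_insert_of_mem _ (Or.inl ⟨i, rfl⟩))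
  have hsuf : ∀ r ∈ R, ∀ L, L <:+ r.toWord → ∀ x,
      c x = c (FreeGroup.lift g (FreeGroup.mk L)) → x = FreeGroup.lift g (FreeGroup.mk L) :=
    fun r hr L hL => hc _ (Set.mem_insert_of_mem _
      (Or.inr (Set.mem_iUnion₂.2 ⟨r, hr, L, hL, rfl⟩)))
  let W : G → FreeGroup (Fin n) := fun t => word FreeGroup.of (J t) (ρ t)
  have hlift : ∀ {K : Type x} [Group K] (k : Fin n → K) (t : G),
      FreeGroup.lift k (W t) = word k (J t) (ρ t) := by
    intro K _ k t
    simp [W, map_word]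
  have hlift' : ∀ {K : Type y} [Group K] (k : Fin n → K) (t : G),
      FreeGroup.lift k (W t) = word k (J t) (ρ t) := by
    intro K _ k t
    simp [W, map_word]
  have hW : ∀ t, t ≠ 1 → FreeGroup.lift g (W t) = t := by
    intro t ht
    simp only [W, map_word, FreeGroup.lift_apply_of]
    exact (hrep t ht).symm
  refine ⟨n, g, _, c, inferInstance, hg,
    determinesQuotient_of_relators h1 hgen hR hsuf hg hone hW ?_,
    determinesQuotient_of_relators h1 hgen hR hsuf hg hone hW ?_⟩
  · intro K _ k d hk hcd t ht y hy
    rw [hlift]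
    exact golden_transfer hgold K k d hk hcd t ht y hy
  · intro K _ k d hk hcd t ht y hy
    rw [hlift']
    exact golden_transfer hgold K k d hk hcd t ht y hy

/-! ### The isomorphism -/

/-- A finitely generated, finitely presented Hopfian group admitting a golden
system is isomorphic to any finitely generated group two-sided configuration equivalent
to it. -/
theorem isomorphism_of_configEqT_of_goldenSystem {G : Type u} {H : Type w}
    [Group G] [Group H] (hGfg : Group.FG G) (hHfg : Group.FG H)
    (hGfp : IsFinitelyPresentedGroup G) (hGhop : IsHopfianGroup G)
    (hgold : HasGoldenSystem.{u, v} G) (heq : ConfigEqT G H) :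
    Nonempty (G ≃* H) := by
  classical
  obtain ⟨n, g, α, c, hα, hg, hdetG, hdetH⟩ :=
    exists_determinesQuotient.{u, v, u, w} hGfp hgold
  obtain ⟨h, d, hh, hcd⟩ := heq.exists_color hg c
  obtain ⟨θ, hθ, hθg, -⟩ := hdetH H h d hh hcd
  refine ⟨(MulEquiv.ofBijective θ ⟨(injective_iff_map_eq_one θ).2 fun a ha => ?_, hθ⟩).symm⟩
  by_contra hne
  -- Colour `H` by pulling `c` back along `θ`, splitting off the identity as a new colour.
  obtain ⟨g', b, hg', hb⟩ := ConfigEqT.exists_color (Eq.symm heq) hh fun x =>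
    (c (θ x), decide (x = 1))
  have hcoarse : colorConfigs g c = colorConfigs g' (Prod.fst ∘ b) := by
    rw [← colorConfigs_comp_eq Prod.fst hb]
    refine Eq.trans ?_ (colorConfigs_pullback θ hθ h c).symm
    simp [hθg]
  obtain ⟨θ', hθ', -, hcol⟩ := hdetG G g' _ hg' hcoarse
  have hinj := (hGhop θ' hθ').1
  have hrange : ∀ x : H, ∃ y : G, b y = (c (θ x), decide (x = 1)) := by
    intro x
    have : ((c (θ x), decide (x = 1)), (fun i => (c (θ (h i * x)), decide (h i * x = 1))),
        fun i => (c (θ (x * h i)), decide (x * h i = 1))) ∈ colorConfigs g' b := hb ▸ ⟨x, rfl⟩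
    obtain ⟨y, hy⟩ := this
    exact ⟨y, congrArg Prod.fst hy⟩
  obtain ⟨y₁, hy₁⟩ := hrange 1
  obtain ⟨y₂, hy₂⟩ := hrange a
  -- Both `y₁` and `y₂` have the coarse colour of `1`, so injectivity of `θ'` identifies them.
  have hz : θ' (y₂ * y₁⁻¹) = 1 := hcol y₁ _ (by simp [hy₁]) (by simp [hy₂, ha])
  have hy : y₂ = y₁ := mul_inv_eq_one.1 (hinj (hz.trans (map_one θ').symm))
  rw [hy, hy₁] at hy₂
  simp [hne] at hy₂
end

section
/- Let G be a finitely generated, finitely presented Hopfian group having a golden configuration pair, and let H be a finitely generated group with G ≈ₜ H. Then G and H are isomorphic. -/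
/-!
Say that a coloring `κ` of `G` together with `g : Fin n → G` *matches* a coloring `l` of `H` with
`h : Fin n → H` when both pairs realise the same two-sided color patterns; this is equality of
two-sided configuration sets, and it survives coarsening both colorings.

If `κ` isolates enough points of `G` (each of them is alone in its color class), then a word in `h`
carries the color class in `H` of an isolated point `s` onto the class of the point to which the
corresponding word in `g` carries `s` (`exists_finite_propagate`). Hence the class `M` of the
identity is stable under conjugation, and the relators of `G` in `g` hold in `h` modulo the normal
subgroup `stabilizer H M`. Goldenness says that words nontrivial in `g` move `M` off itself, so
every relation of `h` is a relation of `g` (`GoldenAt.exists_finite_relations`): there is a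
surjection `H → G` carrying `h` to `g`.

To invert it, refine the coloring of `H` so that it isolates many points and match the result with
a pair `(g', κ')` on `G`. Coarsening shows that `(g', κ')` also matches the golden pair, so every
relation of `g'` is a relation of `g`. By the Hopf property, `g' ↦ g` is an automorphism of `G`, so
the relators of `g` hold exactly in `g'`. Since the points of `H` that they reach are isolated, they
hold in `h` as well. Thus `g` and `h` satisfy the same relations.

The golden hypothesis tests groups in one universe only; since finitely generated groups are
countable, it transfers to every universe (`GoldenAt.transfer`).
-/

open scoped Pointwise

universe u v

universe w

namespace GoldenIso

/-! ### Matching colorings -/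

section Matching

section Colorings

variable {G α : Type*}

/-- Each point of `S` is alone in its color class. -/
def Isolates (κ : G → α) (S : Set G) : Prop :=
  ∀ s ∈ S, ∀ x, κ x = κ s → x = s

lemma Isolates.mono {κ : G → α} {S T : Set G} (hT : Isolates κ T) (h : S ⊆ T) :
    Isolates κ S := fun s hs => hT s (h hs)

lemma exists_coloring {m : ℕ} {E : Fin m → Set G} (hE : IsPartition E) :
    ∃ κ : G → Fin m, ∀ x i, x ∈ E i ↔ κ x = i := by
  choose κ h₁ h₂ using hE
  exact ⟨κ, fun x i => ⟨fun h => (h₂ x i h).symm, fun h => h ▸ h₁ x⟩⟩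

/-- Any coloring can be refined so as to isolate the points of a given finite set. -/
lemma exists_refinement {m : ℕ} (κ : G → Fin m) {S : Set G} (hS : S.Finite) :
    ∃ (k : ℕ) (κ' : G → Fin k) (π : Fin k → Fin m), π ∘ κ' = κ ∧ Isolates κ' S := by
  classical
  have := hS.fintype
  let e := Fintype.equivFin (Fin m × Option S)
  let f : G → Option S := fun x => if hx : x ∈ S then some ⟨x, hx⟩ else none
  refine ⟨_, fun x => e (κ x, f x), fun j => (e.symm j).1, ?_, ?_⟩
  · ext x
    simp
  · intro s hs x hx
    have h2 : f x = f s := congrArg Prod.snd (e.injective hx)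
    by_cases hxS : x ∈ S
    · simpa [f, hs, hxS] using h2
    · simp [f, hs, hxS] at h2

end Colorings

variable {G H K α β : Type*} [Group G] [Group H] [Group K] {n : ℕ}

/-- Every two-sided color pattern of `(g, κ)` is also one of `(h, l)`. -/
def Sim (g : Fin n → G) (κ : G → α) (h : Fin n → H) (l : H → α) : Prop :=
  ∀ x, ∃ y, l y = κ x ∧ ∀ i, l (h i * y) = κ (g i * x) ∧ l (y * h i) = κ (x * g i)

/-- Equality of two-sided configuration sets, in terms of colorings; a partition into cells is
replaced by the map sending a point to the index of its cell. -/
def Match (g : Fin n → G) (κ : G → α) (h : Fin n → H) (l : H → α) : Prop :=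
  Sim g κ h l ∧ Sim h l g κ

lemma Match.symm {g : Fin n → G} {κ : G → α} {h : Fin n → H} {l : H → α}
    (hm : Match g κ h l) : Match h l g κ := ⟨hm.2, hm.1⟩

lemma Sim.trans {g : Fin n → G} {κ : G → α} {h : Fin n → H} {l : H → α} {k : Fin n → K}
    {μ : K → α} (h₁ : Sim g κ h l) (h₂ : Sim h l k μ) : Sim g κ k μ := by
  intro x
  obtain ⟨y, hy, hy'⟩ := h₁ x
  obtain ⟨z, hz, hz'⟩ := h₂ y
  exact ⟨z, hz.trans hy, fun i => ⟨(hz' i).1.trans (hy' i).1, (hz' i).2.trans (hy' i).2⟩⟩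

lemma Match.trans {g : Fin n → G} {κ : G → α} {h : Fin n → H} {l : H → α} {k : Fin n → K}
    {μ : K → α} (h₁ : Match g κ h l) (h₂ : Match h l k μ) : Match g κ k μ :=
  ⟨h₁.1.trans h₂.1, h₂.2.trans h₁.2⟩

lemma Sim.comp {g : Fin n → G} {κ : G → α} {h : Fin n → H} {l : H → α}
    (hs : Sim g κ h l) (π : α → β) : Sim g (π ∘ κ) h (π ∘ l) := by
  intro x
  obtain ⟨y, hy, hy'⟩ := hs x
  exact ⟨y, congrArg π hy, fun i => ⟨congrArg π (hy' i).1, congrArg π (hy' i).2⟩⟩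

lemma Match.comp {g : Fin n → G} {κ : G → α} {h : Fin n → H} {l : H → α}
    (hm : Match g κ h l) (π : α → β) : Match g (π ∘ κ) h (π ∘ l) :=
  ⟨hm.1.comp π, hm.2.comp π⟩

/-- A group isomorphism matches any coloring with its transport. -/
lemma Match.of_equiv (h : Fin n → H) (l : H → α) (e : H ≃* K) :
    Match h l (e ∘ h) (l ∘ e.symm) := by
  constructor
  · intro x
    exact ⟨e x, by simp, fun i => by simp⟩
  · intro y
    exact ⟨e.symm y, by simp, fun i => by simp⟩

lemma twoSidedConfigSet_subset {m : ℕ} {g : Fin n → G} {h : Fin n → H}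
    {E : Fin m → Set G} {F : Fin m → Set H} {κ : G → Fin m} {l : H → Fin m}
    (hE : ∀ x i, x ∈ E i ↔ κ x = i) (hF : ∀ x i, x ∈ F i ↔ l x = i) :
    TwoSidedConfigSet g E ⊆ TwoSidedConfigSet h F ↔ Sim g κ h l := by
  simp only [TwoSidedConfigSet, hE, hF]
  constructor
  · intro hs x
    obtain ⟨y, hy, hy'⟩ := @hs (κ x, fun i => κ (g i * x), fun i => κ (x * g i))
      ⟨x, rfl, fun i => ⟨rfl, rfl⟩⟩
    exact ⟨y, hy, hy'⟩
  · rintro hs c ⟨x, hx, hx'⟩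
    obtain ⟨y, hy, hy'⟩ := hs x
    exact ⟨y, hy.trans hx, fun i => ⟨(hy' i).1.trans (hx' i).1, (hy' i).2.trans (hx' i).2⟩⟩

lemma twoSidedConfigSet_eq {m : ℕ} {g : Fin n → G} {h : Fin n → H}
    {E : Fin m → Set G} {F : Fin m → Set H} {κ : G → Fin m} {l : H → Fin m}
    (hE : ∀ x i, x ∈ E i ↔ κ x = i) (hF : ∀ x i, x ∈ F i ↔ l x = i) :
    TwoSidedConfigSet g E = TwoSidedConfigSet h F ↔ Match g κ h l := by
  rw [Set.Subset.antisymm_iff, twoSidedConfigSet_subset hE hF, twoSidedConfigSet_subset hF hE]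
  rfl

lemma exists_match (heq : ConfigEqT G H) {m : ℕ} {g : Fin n → G} (hg : IsGenerating g)
    (κ : G → Fin m) :
    ∃ (h : Fin n → H) (l : H → Fin m), IsGenerating h ∧ Match g κ h l := by
  have hmem : (⟨n, m, TwoSidedConfigSet g fun i => κ ⁻¹' {i}⟩ :
      Σ n m : ℕ, Set (TwoSidedConfig n m)) ∈ TwoSidedConfigSets G :=
    ⟨g, fun i => κ ⁻¹' {i}, hg, fun x => ⟨κ x, rfl, fun i hi => hi.symm⟩, rfl⟩
  rw [heq] at hmem
  obtain ⟨h, F, hh, hF, hEF⟩ := hmem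
  obtain ⟨l, hl⟩ := exists_coloring hF
  exact ⟨h, l, hh, (twoSidedConfigSet_eq (fun x i => Iff.rfl) hl).1 hEF⟩

/-! ### Propagation along words -/

lemma Match.step_left {g : Fin n → G} {κ : G → α} {h : Fin n → H} {l : H → α}
    (hm : Match g κ h l) {i : Fin n} {s : G} (hs : Isolates κ {s, g i * s}) (y : H) :
    l y = κ s ↔ l (h i * y) = κ (g i * s) := by
  obtain ⟨x, hx, hx'⟩ := hm.2 y
  rw [← (hx' i).1, ← hx]
  constructor
  · intro h1
    rw [hs s (by simp) x h1]
  · intro h1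
    rw [mul_left_cancel (hs (g i * s) (by simp) _ h1)]

lemma Match.step_right {g : Fin n → G} {κ : G → α} {h : Fin n → H} {l : H → α}
    (hm : Match g κ h l) {i : Fin n} {s : G} (hs : Isolates κ {s, s * g i}) (y : H) :
    l y = κ s ↔ l (y * h i) = κ (s * g i) := by
  obtain ⟨x, hx, hx'⟩ := hm.2 y
  rw [← (hx' i).2, ← hx]
  constructor
  · intro h1
    rw [hs s (by simp) x h1]
  · intro h1
    rw [mul_right_cancel (hs (s * g i) (by simp) _ h1)]

end Matching

section Propagation

variable {G : Type u} [Group G] {n : ℕ}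

/-- For each word `w` and base point `s`, once finitely many points of `G` are isolated, the word
`w` in `h` carries the color class of `s` exactly onto that of its image under `w` in `g`. -/
lemma exists_finite_propagate (g : Fin n → G) (w : FreeGroup (Fin n)) (s : G) :
    ∃ S : Set G, S.Finite ∧ ∀ (H : Type w) [Group H] (h : Fin n → H) (k : ℕ) (κ : G → Fin k)
      (l : H → Fin k), Isolates κ S → Match g κ h l →
      ∀ y, l y = κ s ↔ l (FreeGroup.lift h w * y) = κ (FreeGroup.lift g w * s) := by
  induction w using FreeGroup.induction_on generalizing s with
  | C1 => exact ⟨∅, Set.finite_empty, by simp⟩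
  | of i =>
    refine ⟨{s, g i * s}, by simp, fun H _ h k κ l hs hm y => ?_⟩
    simpa using hm.step_left hs y
  | inv_of i ih =>
    obtain ⟨S, hS, hP⟩ := ih ((g i)⁻¹ * s)
    refine ⟨S, hS, fun H _ h k κ l hs hm y => ?_⟩
    simpa using (hP H h k κ l hs hm ((h i)⁻¹ * y)).symm
  | mul v w ihv ihw =>
    obtain ⟨S, hS, hP⟩ := ihw s
    obtain ⟨T, hT, hQ⟩ := ihv (FreeGroup.lift g w * s)
    refine ⟨S ∪ T, hS.union hT, fun H _ h k κ l hs hm y => ?_⟩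
    rw [hP H h k κ l (hs.mono Set.subset_union_left) hm,
      hQ H h k κ l (hs.mono Set.subset_union_right) hm]
    simp [mul_assoc]

/-- `exists_finite_propagate`, uniformly for a finite set of words. -/
lemma exists_finite_propagate_set (g : Fin n → G) {R : Set (FreeGroup (Fin n))} (hR : R.Finite)
    (s : G) :
    ∃ S : Set G, S.Finite ∧ ∀ (H : Type w) [Group H] (h : Fin n → H) (k : ℕ) (κ : G → Fin k)
      (l : H → Fin k), Isolates κ S → Match g κ h l →
      ∀ w ∈ R, ∀ y, l y = κ s ↔ l (FreeGroup.lift h w * y) = κ (FreeGroup.lift g w * s) := by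
  choose S hS hP using fun w => exists_finite_propagate.{u, w} g w s
  refine ⟨⋃ w ∈ R, S w, hR.biUnion fun w _ => hS w, fun H _ h k κ l hs hm w hw => ?_⟩
  exact hP w H h k κ l (hs.mono (Set.subset_biUnion_of_mem hw)) hm

end Propagation

/-! ### Relators and homomorphisms -/

lemma lift_surjective {G : Type*} [Group G] {n : ℕ} {g : Fin n → G} (hg : IsGenerating g) :
    Function.Surjective (FreeGroup.lift g) :=
  FreeGroup.lift_surjective_iff_closure_range_eq_top.2 hg

/-- A finitely presented group has a finite set of defining relators with respect to any finite
generating tuple. -/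
lemma exists_finite_relators {G : Type*} [Group G] (hG : IsFinitelyPresentedGroup G) {n : ℕ}
    {g : Fin n → G} (hg : IsGenerating g) :
    ∃ R : Set (FreeGroup (Fin n)), R.Finite ∧ (∀ r ∈ R, FreeGroup.lift g r = 1) ∧
      (FreeGroup.lift g).ker ≤ Subgroup.normalClosure R := by
  obtain ⟨n₀, rels, hfin, ⟨e⟩⟩ := hG
  let a : Fin n₀ → G := fun j => e (PresentedGroup.of j)
  have ha : ∀ w, FreeGroup.lift a w = e (PresentedGroup.mk rels w) := fun w =>
    (FreeGroup.lift_unique (e.toMonoidHom.comp (PresentedGroup.mk rels)) fun j => rfl).symm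
  have hasurj : Function.Surjective (FreeGroup.lift a) := fun x => by
    obtain ⟨w, hw⟩ := PresentedGroup.mk_surjective rels (e.symm x)
    exact ⟨w, by rw [ha, hw, e.apply_symm_apply]⟩
  -- Tietze moves: `u` writes the old generators in the new ones, and `v` the converse.
  choose u hu using fun j => lift_surjective hg (a j)
  choose v hv using fun i => hasurj (g i)
  have hU : ∀ w, FreeGroup.lift g (FreeGroup.lift u w) = FreeGroup.lift a w := fun w =>
    FreeGroup.lift_unique ((FreeGroup.lift g).comp (FreeGroup.lift u)) fun j => by simp [hu]
  let R : Set (FreeGroup (Fin n)) := FreeGroup.lift u '' rels ∪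
    Set.range fun i => FreeGroup.lift u (v i) * (FreeGroup.of i)⁻¹
  refine ⟨R, (hfin.image _).union (Set.finite_range _), ?_, ?_⟩
  · rintro _ (⟨r, hr, rfl⟩ | ⟨i, rfl⟩)
    · rw [hU, ha, (PresentedGroup.mk_eq_one_iff).2 (Subgroup.subset_normalClosure hr), map_one]
    · simp [hU, hv]
  · let q := QuotientGroup.mk' (Subgroup.normalClosure R)
    have hq : ∀ r ∈ R, q r = 1 := fun r hr =>
      (QuotientGroup.eq_one_iff r).2 (Subgroup.subset_normalClosure hr)
    have hqu : ∀ w, FreeGroup.lift (fun j => q (u j)) w = q (FreeGroup.lift u w) := fun w =>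
      (FreeGroup.lift_unique (q.comp (FreeGroup.lift u)) fun j => by simp).symm
    let ψ : PresentedGroup rels →* FreeGroup (Fin n) ⧸ Subgroup.normalClosure R :=
      PresentedGroup.toGroup (f := fun j => q (u j)) fun r hr => by
        rw [hqu]
        exact hq _ (Or.inl ⟨r, hr, rfl⟩)
    let χ := ψ.comp e.symm.toMonoidHom
    have hχa : ∀ w, χ (FreeGroup.lift a w) = q (FreeGroup.lift u w) := fun w => by
      rw [← hqu]
      exact FreeGroup.lift_unique (χ.comp (FreeGroup.lift a)) fun j => by simp [χ, ψ, a]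
    have hχ : ∀ w, χ (FreeGroup.lift g w) = q w := fun w => by
      have h : χ.comp (FreeGroup.lift g) = q := by
        ext i
        have h1 := hχa (v i)
        have h2 := hq _ (Or.inr ⟨i, rfl⟩)
        simp only [map_mul, map_inv, mul_inv_eq_one] at h2
        rw [hv, h2] at h1
        simpa using h1
      exact DFunLike.congr_fun h w
    intro w hw
    rw [MonoidHom.mem_ker] at hw
    have := hχ w
    rw [hw, map_one] at this
    exact (QuotientGroup.eq_one_iff w).1 this.symm

lemma exists_hom {G H : Type*} [Group G] [Group H] {n : ℕ} {g : Fin n → G} {h : Fin n → H}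
    (hg : IsGenerating g) (hrel : ∀ w, FreeGroup.lift g w = 1 → FreeGroup.lift h w = 1) :
    ∃ f : G →* H, ∀ w, f (FreeGroup.lift g w) = FreeGroup.lift h w :=
  ⟨(FreeGroup.lift g).liftOfSurjective (lift_surjective hg) ⟨FreeGroup.lift h, hrel⟩, fun w =>
    (FreeGroup.lift g).liftOfRightInverse_comp_apply _ _ ⟨FreeGroup.lift h, hrel⟩ w⟩

/-- Generating tuples satisfying the same relations give isomorphic groups. -/
lemma nonempty_mulEquiv {G H : Type*} [Group G] [Group H] {n : ℕ} {g : Fin n → G}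
    {h : Fin n → H} (hg : IsGenerating g) (hh : IsGenerating h)
    (hrel : ∀ w, FreeGroup.lift g w = 1 ↔ FreeGroup.lift h w = 1) : Nonempty (G ≃* H) := by
  obtain ⟨f, hf⟩ := exists_hom hg fun w => (hrel w).1
  refine ⟨MulEquiv.ofBijective f ⟨?_, fun y => ?_⟩⟩
  · rw [injective_iff_map_eq_one]
    intro x hx
    obtain ⟨w, rfl⟩ := lift_surjective hg x
    rw [hf] at hx
    exact (hrel w).2 hx
  · obtain ⟨w, rfl⟩ := lift_surjective hh y
    exact ⟨_, hf w⟩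

/-! ### Golden pairs -/

lemma word_eq_lift {G : Type*} [Group G] {n p : ℕ} (g : Fin n → G) (J : Fin p → Fin n)
    (ρ : Fin p → Bool) : word g J ρ = FreeGroup.lift g (word FreeGroup.of J ρ) := by
  unfold word
  rw [map_list_prod, List.map_map]
  congr 2
  funext i
  by_cases hi : ρ i <;> simp [hi]

/-- The golden condition for the coloring `κ` of `G`, tested on groups in the universe `v`: each
`x ≠ 1` is represented by a word which, in any matching pair, moves the color class of the identity
off itself. -/
def GoldenAt {G : Type u} [Group G] {n m : ℕ} (g : Fin n → G) (κ : G → Fin m) : Prop :=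
  ∀ x : G, x ≠ 1 → ∃ a : FreeGroup (Fin n), FreeGroup.lift g a = x ∧
    ∀ (K : Type v) [Group K] (h : Fin n → K) (l : K → Fin m), IsGenerating h → Match g κ h l →
      ∀ y, l y = κ 1 → l (FreeGroup.lift h a * y) ≠ κ 1

lemma IsGenerating.comp_equiv {G H : Type*} [Group G] [Group H] {n : ℕ} {g : Fin n → G}
    (hg : IsGenerating g) (e : G ≃* H) : IsGenerating (e ∘ g) := by
  refine FreeGroup.lift_surjective_iff_closure_range_eq_top.1 fun y => ?_
  obtain ⟨w, hw⟩ := lift_surjective hg (e.symm y)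
  refine ⟨w, ?_⟩
  rw [← FreeGroup.lift_unique (e.toMonoidHom.comp (FreeGroup.lift g)) (by simp)]
  simp [hw]

/-- A finitely generated group is countable, so it has an isomorphic copy in any universe. -/
lemma GoldenAt.transfer {G : Type u} [Group G] {n m : ℕ} {g : Fin n → G} {κ : G → Fin m}
    (hG : GoldenAt.{u, v} g κ) : GoldenAt.{u, w} g κ := by
  intro x hx
  obtain ⟨a, ha, hK⟩ := hG x hx
  refine ⟨a, ha, fun K _ h l hh hm y hy => ?_⟩
  have : Countable (FreeGroup (Fin n)) := Quot.mk_surjective.countable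
  have : Countable K := (lift_surjective hh).countable
  have : Small.{v} K := Countable.toSmall K
  let e : K ≃* Shrink.{v} K := Shrink.mulEquiv.symm
  have := hK (Shrink.{v} K) (e ∘ h) (l ∘ e.symm) (IsGenerating.comp_equiv hh e)
    (hm.trans (Match.of_equiv h l e)) (e y) (by simpa using hy)
  rw [← FreeGroup.lift_unique (e.toMonoidHom.comp (FreeGroup.lift h)) (by simp)] at this
  simpa using this

lemma exists_goldenAt {G : Type u} [Group G] (hG : HasGoldenConfigPair.{u, v} G) :
    ∃ (n m : ℕ) (g : Fin n → G) (κ : G → Fin m), IsGenerating g ∧ GoldenAt.{u, v} g κ := by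
  obtain ⟨n, m, g, E, hg, hE, i₀, hi₀, p, J, ρ, hw, hK⟩ := hG
  obtain ⟨c, hc⟩ := exists_coloring hE
  refine ⟨n, m, g, c ∘ QuotientGroup.mk' ⊥, hg, fun x hx => ?_⟩
  have h1 : (c ∘ QuotientGroup.mk' (⊥ : Subgroup G)) 1 = i₀ := by
    rw [← (hc _ _).1 (show QuotientGroup.mk' (⊥ : Subgroup G) 1 ∈ E i₀ by rw [hi₀, map_one]; rfl)]
    rfl
  have hx' : x ∉ (⊥ : Subgroup G) := by simpa using hx
  refine ⟨word FreeGroup.of (J x) (ρ x), ?_, fun K _ h l hh hm y hy hyw => ?_⟩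
  · have hinj : Function.Injective (QuotientGroup.mk' (⊥ : Subgroup G)) := by
      rw [← MonoidHom.ker_eq_bot_iff, QuotientGroup.ker_mk']
    apply hinj
    rw [hw x hx', word_eq_lift (fun i => QuotientGroup.mk' ⊥ (g i))]
    exact FreeGroup.lift_unique ((QuotientGroup.mk' ⊥).comp (FreeGroup.lift g)) (by simp)
  · rw [h1] at hy hyw
    have := hK K h (fun i => l ⁻¹' {i}) hh (fun x => ⟨l x, rfl, fun i hi => hi.symm⟩)
      ((twoSidedConfigSet_eq (κ := c ∘ QuotientGroup.mk' ⊥) (l := l) (fun x i => hc _ _)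
        fun x i => Iff.rfl).2 hm) x hx'
    rw [word_eq_lift h] at this
    exact Set.eq_empty_iff_forall_notMem.1 this _ ⟨Set.smul_mem_smul_set hy, hyw⟩

/-- If a refinement of a golden coloring isolates suitable points, then any matching tuple in
another group satisfies only relations of `g`. -/
lemma GoldenAt.exists_finite_relations {G : Type u} [Group G] {n m : ℕ} {g : Fin n → G}
    {κ₀ : G → Fin m} (hG : GoldenAt.{u, w} g κ₀) {R : Set (FreeGroup (Fin n))} (hR : R.Finite)
    (hRg : ∀ r ∈ R, FreeGroup.lift g r = 1)
    (hker : (FreeGroup.lift g).ker ≤ Subgroup.normalClosure R) :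
    ∃ S : Set G, S.Finite ∧ ∀ (H : Type w) [Group H] (h : Fin n → H) (k : ℕ) (κ : G → Fin k)
      (l : H → Fin k) (π : Fin k → Fin m), IsGenerating h → π ∘ κ = κ₀ → Isolates κ S →
      Match g κ h l → ∀ w, FreeGroup.lift h w = 1 → FreeGroup.lift g w = 1 := by
  obtain ⟨S, hS, hP⟩ := exists_finite_propagate_set.{u, w} g hR 1
  refine ⟨S ∪ insert 1 (Set.range g), hS.union ((Set.finite_range g).insert 1),
    fun H _ h k κ l π hh hπ hs hm w hw => ?_⟩
  have hs1 : ∀ i, Isolates κ {1, g i} := fun i => hs.mono <| by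
    rintro _ (rfl | rfl) <;> simp
  let M : Set H := {y | l y = κ 1}
  let N : Subgroup H := MulAction.stabilizer H M
  have hN : ∀ b, b ∈ N ↔ ∀ y, l (b * y) = κ 1 ↔ l y = κ 1 := fun b =>
    MulAction.mem_stabilizer_set
  -- `h i * M` and `M * h i` both equal the color class of `g i`.
  have hconj_gen : ∀ i y, l (h i * y * (h i)⁻¹) = κ 1 ↔ l y = κ 1 := fun i y => by
    have h1 := hm.step_left (i := i) (s := 1) (by simpa using hs1 i) y
    have h2 := hm.step_right (i := i) (s := 1) (by simpa using hs1 i) (h i * y * (h i)⁻¹)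
    simp only [mul_one, one_mul, inv_mul_cancel_right] at h1 h2
    rw [h1, h2]
  have hconj : ∀ b y, l (b * y * b⁻¹) = κ 1 ↔ l y = κ 1 := fun b => by
    have hb : b ∈ Subgroup.closure (Set.range h) := by
      rw [show Subgroup.closure (Set.range h) = ⊤ from hh]
      trivial
    induction hb using Subgroup.closure_induction with
    | mem _ hx =>
      obtain ⟨i, rfl⟩ := hx
      exact hconj_gen i
    | one => simp
    | mul b c _ _ hb hc =>
      intro y
      rw [← hc y, ← hb (c * y * c⁻¹)]
      simp [mul_assoc]
    | inv b _ hb =>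
      intro y
      rw [← hb]
      simp [mul_assoc]
  have hnormal : N.Normal := ⟨fun b hb c => by
    rw [hN] at hb ⊢
    intro y
    have h1 := hconj c (b * (c⁻¹ * y * c))
    have h2 := hconj c⁻¹ y
    simp only [mul_assoc, mul_inv_cancel, mul_one, inv_inv] at h1 h2 ⊢
    rw [h1, hb, h2]⟩
  have hrel : ∀ w, FreeGroup.lift g w = 1 → FreeGroup.lift h w ∈ N := fun w hw =>
    Subgroup.normalClosure_le_normal (N := N.comap (FreeGroup.lift h)) (fun r hr => by
      refine (hN _).2 fun y => ?_
      have := hP H h k κ l (hs.mono Set.subset_union_left) hm r hr y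
      rw [hRg r hr, one_mul] at this
      exact this.symm) (hker hw)
  by_contra hne
  obtain ⟨a, ha, hK⟩ := hG _ hne
  have haN : FreeGroup.lift h a ∈ N := by
    have := hrel (a * w⁻¹) (by rw [map_mul, map_inv, ha, mul_inv_cancel])
    simpa [hw] using this
  obtain ⟨y, hy, -⟩ := hm.1 1
  subst hπ
  exact hK H h (π ∘ l) hh (hm.comp π) y (congrArg π hy) (congrArg π (((hN _).1 haN y).2 hy))

end GoldenIso

/-- A finitely generated, finitely presented Hopfian group having a golden
configuration pair is isomorphic to any finitely generated group two-sided configuration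
equivalent to it. -/
theorem isomorphism_of_configEqT_of_goldenConfigPair {G : Type u} {H : Type w}
    [Group G] [Group H] (hGfg : Group.FG G) (hHfg : Group.FG H)
    (hGfp : IsFinitelyPresentedGroup G) (hGhop : IsHopfianGroup G)
    (hgold : HasGoldenConfigPair.{u, v} G) (heq : ConfigEqT G H) :
    Nonempty (G ≃* H) := by
  obtain ⟨n, m, g, κ₀, hg, hgold⟩ := GoldenIso.exists_goldenAt hgold
  obtain ⟨R, hR, hRg, hker⟩ := GoldenIso.exists_finite_relators hGfp hg
  obtain ⟨S, hS, hSH⟩ :=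
    (hgold.transfer : GoldenIso.GoldenAt.{u, w} g κ₀).exists_finite_relations hR hRg hker
  obtain ⟨T, hT, hTG⟩ :=
    (hgold.transfer : GoldenIso.GoldenAt.{u, u} g κ₀).exists_finite_relations hR hRg hker
  obtain ⟨k, κ, π, hπ, hκ⟩ := GoldenIso.exists_refinement κ₀ (hS.union hT)
  obtain ⟨h, l, hh, hm⟩ := GoldenIso.exists_match heq hg κ
  have h_to_g := hSH H h k κ l π hh hπ (hκ.mono Set.subset_union_left) hm
  obtain ⟨V, hV, hVP⟩ := GoldenIso.exists_finite_propagate_set.{w, u} h hR 1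
  obtain ⟨k', l', π', hπ', hl'⟩ := GoldenIso.exists_refinement l (hV.insert 1)
  obtain ⟨g', κ', hg', hm'⟩ := GoldenIso.exists_match heq.symm hh l'
  have hmg : GoldenIso.Match g κ g' (π' ∘ κ') := by
    have := hm'.comp π'
    rw [hπ'] at this
    exact hm.trans this
  have g'_to_g := hTG G g' k κ (π' ∘ κ') π hg' hπ (hκ.mono Set.subset_union_right) hmg
  obtain ⟨θ, hθ⟩ := GoldenIso.exists_hom hg' g'_to_g
  have hθ_inj := (hGhop θ fun x => by
    obtain ⟨w, rfl⟩ := GoldenIso.lift_surjective hg x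
    exact ⟨_, hθ w⟩).injective
  have hRg' : ∀ r ∈ R, FreeGroup.lift g' r = 1 := fun r hr =>
    hθ_inj (by rw [hθ, hRg r hr, map_one])
  have hRh : ∀ r ∈ R, FreeGroup.lift h r = 1 := fun r hr => by
    -- A point of `G` with the color of `1 : H` is fixed by `r`, and that color determines `1`.
    obtain ⟨z, hz, -⟩ := hm'.1 1
    have hz' := (hVP G g' k' l' κ' (hl'.mono (Set.subset_insert _ _)) hm' r hr z).1 hz
    rw [hRg' r hr, one_mul, mul_one, hz] at hz'
    exact hl' 1 (Set.mem_insert _ _) _ hz'.symm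
  refine GoldenIso.nonempty_mulEquiv hg hh fun w => ⟨fun hw => ?_, h_to_g w⟩
  exact Subgroup.normalClosure_le_normal (N := (FreeGroup.lift h).ker) hRh (hker hw)
end

section
/- Let G be a finitely generated group that is either polycyclic or an FC-group, and let H be a finitely generated group with G ≈ₜ H. Then G and H are isomorphic. -/
/-!
Colour a group `G` by finitely many colours and fix finitely many generators. A word in the
generators is *golden* if the colours alone force it to move every point coloured as `1` off the
class of `1`. A *golden presentation* consists of generators, a finite colouring and finitely many
relators modulo which every word is either trivial or golden. Finite groups and the infinite cyclic
group have golden presentations, and extensions preserve the existence of one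
(`golden_of_extension`). The maximal condition on subgroups behaves in the same way. Both therefore
hold for polycyclic groups and for finitely generated FC-groups, whose centre is a finitely
generated abelian group of finite index.

Refine the colouring so that finitely many chosen points have colours of their own, and let `K` be
generated by `h` with a colouring showing only configurations that occur in `G` for the generators
`g`, and with a point coloured as `1`. The class of points of `K` coloured as `1` is a normal
subset, which is where two-sidedness enters. Hence its stabilizer is a normal subgroup of `K`. It
contains the relators and no golden word, so no golden word is trivial in `K` modulo the relators,
and `h i ↦ g i` extends to an epimorphism `K → G` (`IsGoldenPresentation.exists_hom`).

For `K = H` this gives an epimorphism `φ : H → G`. Let `z` be in its kernel, the value of a word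
`w` in `h`. Pull the colouring of `G` back to `H` along `φ` and isolate the points met along `w`.
By equivalence this colouring has a counterpart in `G`, for generators `g'`. As before, `g' i ↦ g i`
defines an epimorphism `ψ : G → G`, which is injective by the maximal condition. Since `w` is
trivial in `G` for `g`, it is trivial for `g'`. Following the colours along `w` shows that `z` has
the colour of `1` in `H`, so `z = 1`.
-/

open scoped Pointwise

universe u v

/-! ### Golden presentations -/

/-- Every one-step move `x ↦ ρ i x` on the coloured set `(X, F)` has the colours of some move
`y ↦ g i * y` on the coloured group `(G, c)`. -/
def Compat {G : Type*} [Group G] {ι κ X : Type*} (g : ι → G) (c : G → κ)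
    (ρ : ι → Equiv.Perm X) (F : X → κ) : Prop :=
  ∀ i x, ∃ y, c y = F x ∧ c (g i * y) = F (ρ i x)

/-- A word `w` is golden for `(g, c)` if the colours alone force it to move every point having the
colour of `1` to a point of another colour, in every compatible coloured set.  Since the free group
on finitely many letters is countable, it loses nothing to let `X` range over `Type` only. -/
def GoldenWord {G : Type*} [Group G] {ι κ : Type} (g : ι → G) (c : G → κ)
    (w : FreeGroup ι) : Prop :=
  ∀ (X : Type) (ρ : ι → Equiv.Perm X) (F : X → κ), Compat g c ρ F →
    ∀ x, F x = c 1 → F (FreeGroup.lift ρ w x) ≠ c 1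

/-- `(g, c, R)` is a golden presentation of `G`: `g` generates `G`, the relators in the finite set
`R` hold in `G`, and modulo `R` every word is either trivial or golden for the colouring `c`.
As golden words are nontrivial in `G`, this implies that `R` presents `G`. -/
structure IsGoldenPresentation {G : Type*} [Group G] {ι κ : Type} (g : ι → G) (c : G → κ)
    (R : Set (FreeGroup ι)) : Prop where
  closure_eq : Subgroup.closure (Set.range g) = ⊤
  finite : R.Finite
  rel : ∀ r ∈ R, FreeGroup.lift g r = 1
  golden : ∀ v, v ∈ Subgroup.normalClosure R ∨
    ∃ w, GoldenWord g c w ∧ v * w⁻¹ ∈ Subgroup.normalClosure R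

/-- `G` has a golden presentation with finitely many generators and colours. -/
def Golden (G : Type*) [Group G] : Prop :=
  ∃ (ι κ : Type) (_ : Finite ι) (_ : Finite κ) (g : ι → G) (c : G → κ) (R : Set (FreeGroup ι)),
    IsGoldenPresentation g c R

/-- All elements are generators, with colours of their own, and the relators are the multiplication
table.  Colours then compute the image of a word in `G`, so every word nontrivial in `G` is
golden. -/
theorem golden_of_finite (G : Type*) [Group G] [Finite G] : Golden G := by
  classical
  obtain ⟨n, ⟨e⟩⟩ := Finite.exists_equiv_fin G
  let s : Fin n → FreeGroup (Fin n) := FreeGroup.of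
  let R : Set (FreeGroup (Fin n)) := Set.range fun p : G × G =>
    s (e p.1) * s (e p.2) * (s (e (p.1 * p.2)))⁻¹
  let L := Subgroup.normalClosure R
  have hR : ∀ x y : G, s (e x) * s (e y) * (s (e (x * y)))⁻¹ ∈ L := fun x y =>
    Subgroup.subset_normalClosure ⟨(x, y), rfl⟩
  let q := QuotientGroup.mk' L
  have hq : ∀ v, q v = 1 ↔ v ∈ L := fun v => QuotientGroup.eq_one_iff v
  -- the multiplication table makes `x ↦ s (e x)` a homomorphism modulo `L`
  let θ : G →* FreeGroup (Fin n) ⧸ L := MonoidHom.mk' (fun x => q (s (e x))) (by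
    intro x y
    have := (hq _).2 (hR x y)
    rw [map_mul, map_mul, map_inv, mul_inv_eq_one] at this
    exact this.symm)
  have hθ : ∀ v, q v = θ (FreeGroup.lift e.symm v) := by
    intro v
    have : q = θ.comp (FreeGroup.lift e.symm) := by
      ext i; simp [θ, s]
    exact DFunLike.congr_fun this v
  refine ⟨Fin n, Fin n, inferInstance, inferInstance, e.symm, e, R, ?_, Set.finite_range _,
    ?_, ?_⟩
  · rw [e.symm.surjective.range_eq, Subgroup.closure_univ]
  · rintro _ ⟨⟨x, y⟩, rfl⟩
    simp [s]
  · intro v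
    by_cases hv : FreeGroup.lift e.symm v = 1
    · left; rw [← hq, hθ, hv, map_one]
    · right
      refine ⟨v, ?_, by simp⟩
      intro X ρ F hF x hx
      have key : ∀ (w : FreeGroup (Fin n)) (x : X),
          F (FreeGroup.lift ρ w x) = e (FreeGroup.lift e.symm w * e.symm (F x)) := by
        intro w
        have h1 : ∀ i x, F (ρ i x) = e (e.symm i * e.symm (F x)) := by
          intro i x
          obtain ⟨y, hy1, hy2⟩ := hF i x
          rw [← hy2, ← hy1, e.symm_apply_apply]
        induction w using FreeGroup.induction_on with
        | C1 => simp
        | of i => intro x; simp [h1]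
        | inv_of i _ =>
          intro x
          have := h1 i ((ρ i)⁻¹ x)
          rw [show ρ i ((ρ i)⁻¹ x) = x from (ρ i).apply_symm_apply x] at this
          simp [this]
        | mul a b ha hb => intro x; simp [ha, hb, mul_assoc]
      rw [key, hx]
      simpa using hv

/-- Colour `s ^ k` by the sign of `k`: a positive power of the generator moves points of colour `0`
to points of colour `1`, a negative one to points of colour `-1`. -/
theorem golden_of_infinite_cyclic (G : Type*) [Group G] [IsCyclic G] [Infinite G] :
    Golden G := by
  obtain ⟨s, hs⟩ := IsCyclic.exists_generator (α := G)
  choose ex hex using fun x => Subgroup.mem_zpowers_iff.1 (hs x)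
  have hinj : Function.Injective fun k : ℤ => s ^ k := by
    rw [injective_zpow_iff_not_isOfFinOrder, ← orderOf_eq_zero_iff]
    exact Infinite.orderOf_eq_zero_of_forall_mem_zpowers hs
  have hex1 : ex 1 = 0 := hinj (by simp [hex])
  have hexs : ∀ y, ex (s * y) = ex y + 1 := by
    intro y; apply hinj; simp [hex, zpow_add_one]
    exact ((Commute.refl s).zpow_right (ex y) |> fun h => by rw [hex] at h; exact h)
  refine ⟨Unit, SignType, inferInstance, inferInstance, fun _ => s, fun x => SignType.sign (ex x),
    ∅, ?_, Set.finite_empty, by simp, ?_⟩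
  · rw [Set.range_const, ← Subgroup.zpowers_eq_closure]
    exact (Subgroup.eq_top_iff' _).2 hs
  · intro v
    obtain ⟨k, rfl⟩ : ∃ k : ℤ, v = FreeGroup.of () ^ k :=
      ⟨FreeGroup.freeGroupUnitEquivInt v, (FreeGroup.freeGroupUnitEquivInt.symm_apply_apply v).symm⟩
    by_cases hk : k = 0
    · left; simp [hk]
    right
    refine ⟨_, ?_, by rw [mul_inv_cancel]; exact one_mem _⟩
    intro X ρ F hF x hx
    simp only [hex1, sign_zero] at hx ⊢
    have hpos : ∀ x, F x = 0 ∨ F x = 1 → F (ρ () x) = 1 := by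
      intro x hx
      obtain ⟨y, h1, h2⟩ := hF () x
      dsimp only at h1 h2
      rw [← h2, hexs, sign_eq_one_iff]
      rw [← h1, sign_eq_zero_iff, sign_eq_one_iff] at hx
      omega
    have hneg : ∀ x, F x = 0 ∨ F x = -1 → F ((ρ ())⁻¹ x) = -1 := by
      intro x hx
      obtain ⟨y, h1, h2⟩ := hF () ((ρ ())⁻¹ x)
      dsimp only at h1 h2
      rw [show ρ () ((ρ ())⁻¹ x) = x from (ρ ()).apply_symm_apply x] at h2
      rw [← h1, sign_eq_neg_one_iff]
      rw [← h2, hexs, sign_eq_zero_iff, sign_eq_neg_one_iff] at hx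
      omega
    have hposn : ∀ n : ℕ, F ((ρ () ^ (n + 1)) x) = 1 := by
      intro n
      induction n with
      | zero => simpa using hpos x (Or.inl hx)
      | succ n ih => rw [pow_succ', Equiv.Perm.mul_apply]; exact hpos _ (Or.inr ih)
    have hnegn : ∀ n : ℕ, F (((ρ ())⁻¹ ^ (n + 1)) x) = -1 := by
      intro n
      induction n with
      | zero => simpa using hneg x (Or.inl hx)
      | succ n ih => rw [pow_succ', Equiv.Perm.mul_apply]; exact hneg _ (Or.inr ih)
    rw [map_zpow, FreeGroup.lift_apply_of]
    obtain ⟨n, rfl | rfl⟩ := k.eq_nat_or_neg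
    · obtain ⟨m, rfl⟩ := Nat.exists_eq_succ_of_ne_zero (n := n) (by simpa using hk)
      rw [zpow_natCast, Nat.succ_eq_add_one, hposn]; decide
    · obtain ⟨m, rfl⟩ := Nat.exists_eq_succ_of_ne_zero (n := n) (by simpa using hk)
      rw [zpow_neg, ← inv_zpow, zpow_natCast, Nat.succ_eq_add_one, hnegn]; decide

theorem golden_of_cyclic (G : Type*) [Group G] [IsCyclic G] : Golden G := by
  cases finite_or_infinite G
  · exact golden_of_finite G
  · exact golden_of_infinite_cyclic G

/-! ### Extensions -/

/-- Golden presentations of `N` and `Q` combine into one of an extension `G` of `Q` by `N`.  Elements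
of `N` are coloured as in `N`, the others as their images in `Q`.  The relators are those of `N`,
those of `Q` corrected by words in the generators of `N`, and the conjugates of the generators of
`N` by those lifted from `Q`.  Modulo the relators a word is `jl u * jr v`, with `u` over `N` and `v`
over `Q`.  If `v` is golden, so is `jl u * jr v`, since generators of `N` preserve the colour
in `Q`; if `v` is trivial, the word reduces to one over `N`. -/
theorem golden_of_extension {N G Q : Type*}
    [Group N] [Group G] [Group Q] (f : N →* G) (p : G →* Q) (hf : Function.Injective f)
    (hp : Function.Surjective p) (hfp : f.range = p.ker)
    (hN : Golden N) (hQ : Golden Q) : Golden G := by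
  classical
  obtain ⟨ι, κ, _, _, a, c, R, ha, hRfin, hR, hgold⟩ := hN
  obtain ⟨ι', κ', _, _, b, c', R', hb, hRfin', hR', hgold'⟩ := hQ
  choose β hβ using fun i => hp (b i)
  have hpf : ∀ n, p (f n) = 1 := fun n => by
    rw [← MonoidHom.mem_ker, ← hfp]; exact ⟨n, rfl⟩
  have hker : ∀ x, p x = 1 → ∃ n, f n = x := fun x hx => by
    rw [← MonoidHom.mem_ker, ← hfp] at hx; exact hx
  have hword : ∀ n, ∃ u, FreeGroup.lift a u = n :=
    FreeGroup.lift_surjective_iff_closure_range_eq_top.2 ha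
  let g : ι ⊕ ι' → G := Sum.elim (fun i => f (a i)) β
  let jl : FreeGroup ι →* FreeGroup (ι ⊕ ι') := FreeGroup.map Sum.inl
  let jr : FreeGroup ι' →* FreeGroup (ι ⊕ ι') := FreeGroup.map Sum.inr
  let pr : FreeGroup (ι ⊕ ι') →* FreeGroup ι' := FreeGroup.lift (Sum.elim 1 FreeGroup.of)
  have hgl : ∀ u, FreeGroup.lift g (jl u) = f (FreeGroup.lift a u) := fun u =>
    DFunLike.congr_fun (show (FreeGroup.lift g).comp jl = f.comp (FreeGroup.lift a) by
      ext i; simp [g, jl]) u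
  have hgr : ∀ u, p (FreeGroup.lift g (jr u)) = FreeGroup.lift b u := fun u =>
    DFunLike.congr_fun (show (p.comp (FreeGroup.lift g)).comp jr = FreeGroup.lift b by
      ext i; simp [g, jr, hβ]) u
  have hrel : ∀ v, p (FreeGroup.lift g v) = 1 → ∃ u, FreeGroup.lift g (jl u) =
      FreeGroup.lift g v := by
    intro v hv
    obtain ⟨n, hn⟩ := hker _ hv
    obtain ⟨u, rfl⟩ := hword n
    exact ⟨u, by rw [hgl, hn]⟩
  -- relators of `Q` are corrected by words in the generators of `N`
  choose! U hU using hrel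
  let corr : FreeGroup (ι ⊕ ι') → FreeGroup (ι ⊕ ι') := fun v => v * (jl (U v))⁻¹
  -- the words whose image has to be identified with a word in the generators of `N`
  let W : Set (FreeGroup (ι ⊕ ι')) := jr '' R' ∪
    ((Set.range fun z : ι' × ι => jr (FreeGroup.of z.1) * jl (FreeGroup.of z.2) *
        (jr (FreeGroup.of z.1))⁻¹) ∪
      Set.range fun z : ι' × ι => (jr (FreeGroup.of z.1))⁻¹ * jl (FreeGroup.of z.2) *
        jr (FreeGroup.of z.1))
  have hWfin : W.Finite :=
    (hRfin'.image _).union ((Set.finite_range _).union (Set.finite_range _))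
  have hW : ∀ v ∈ W, p (FreeGroup.lift g v) = 1 := by
    rintro v (⟨r, hr, rfl⟩ | ⟨z, rfl⟩ | ⟨z, rfl⟩)
    · rw [hgr, hR' r hr]
    · simp only [map_mul, map_inv, hgl, hpf]; simp
    · simp only [map_mul, map_inv, hgl, hpf]; simp
  let S : Set (FreeGroup (ι ⊕ ι')) := jl '' R ∪ corr '' W
  let L := Subgroup.normalClosure S
  let q := QuotientGroup.mk' L
  have hq : ∀ v, q v = 1 ↔ v ∈ L := fun v => QuotientGroup.eq_one_iff v
  let A : Subgroup (FreeGroup (ι ⊕ ι') ⧸ L) := (q.comp jl).range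
  have hqW : ∀ v ∈ W, q v ∈ A := by
    intro v hv
    have : q (corr v) = 1 := (hq _).2 (Subgroup.subset_normalClosure (Or.inr ⟨v, hv, rfl⟩))
    rw [map_mul, map_inv, mul_inv_eq_one] at this
    exact ⟨U v, this.symm⟩
  have hconj : ∀ y : FreeGroup (ι ⊕ ι') ⧸ L, (∀ i, y * q (jl (FreeGroup.of i)) * y⁻¹ ∈ A) →
      ∀ z ∈ A, y * z * y⁻¹ ∈ A := by
    rintro y hy _ ⟨u, rfl⟩
    have hle : (((MulAut.conj y).toMonoidHom.comp (q.comp jl))).range ≤ A := by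
      have he : ((MulAut.conj y).toMonoidHom.comp (q.comp jl)) =
          FreeGroup.lift fun i => y * q (jl (FreeGroup.of i)) * y⁻¹ := by
        ext i; simp
      rw [he]
      apply FreeGroup.range_lift_le
      rintro _ ⟨i, rfl⟩
      exact hy i
    exact hle ⟨u, rfl⟩
  -- the image `A` of the words over `N` is normal, by the conjugation relators
  have hAn : A.Normal := by
    rw [← Subgroup.normalizer_eq_top_iff, eq_top_iff]
    have htop : (FreeGroup.lift fun i => q (FreeGroup.of i)).range = ⊤ := by
      have : (FreeGroup.lift fun i => q (FreeGroup.of i)) = q := by ext i; simp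
      rw [this, MonoidHom.range_eq_top]
      exact QuotientGroup.mk'_surjective L
    rw [← htop]
    apply FreeGroup.range_lift_le
    rintro _ ⟨i | j, rfl⟩
    · apply Subgroup.le_normalizer
      exact ⟨FreeGroup.of i, by simp [jl]⟩
    · have h1 : ∀ z ∈ A, q (jr (FreeGroup.of j)) * z * (q (jr (FreeGroup.of j)))⁻¹ ∈ A := by
        apply hconj
        intro i
        rw [← map_inv, ← map_mul, ← map_mul]
        exact hqW _ (Or.inr (Or.inl ⟨(j, i), rfl⟩))
      have h2 : ∀ z ∈ A, (q (jr (FreeGroup.of j)))⁻¹ * z * ((q (jr (FreeGroup.of j)))⁻¹)⁻¹ ∈ A := by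
        apply hconj
        intro i
        rw [inv_inv, ← map_inv, ← map_mul, ← map_mul]
        exact hqW _ (Or.inr (Or.inr ⟨(j, i), rfl⟩))
      have hj : jr (FreeGroup.of j) = FreeGroup.of (Sum.inr j) := by simp [jr]
      rw [hj] at h1 h2
      refine Subgroup.mem_normalizer_iff.2 fun z => ⟨h1 z, fun hz => ?_⟩
      simpa [mul_assoc] using h2 _ hz
  have hLN : ∀ u ∈ Subgroup.normalClosure R, q (jl u) = 1 := by
    intro u hu
    have : Subgroup.normalClosure R ≤ (q.comp jl).ker := Subgroup.normalClosure_le_normal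
      fun r hr => (hq _).2 (Subgroup.subset_normalClosure (Or.inl ⟨r, hr, rfl⟩))
    exact this hu
  have hLQ : ∀ u ∈ Subgroup.normalClosure R', q (jr u) ∈ A := by
    intro u hu
    have : Subgroup.normalClosure R' ≤ A.comap (q.comp jr) := Subgroup.normalClosure_le_normal
      fun r hr => hqW _ (Or.inl ⟨r, hr, rfl⟩)
    exact this hu
  -- modulo `A`, a word is determined by its letters over `Q`
  have hpr : ∀ v, q v * (q (jr (pr v)))⁻¹ ∈ A := by
    intro v
    have he : (QuotientGroup.mk' A).comp q = (QuotientGroup.mk' A).comp (q.comp (jr.comp pr)) := by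
      ext i
      rcases i with i | j
      · simp only [MonoidHom.comp_apply]
        rw [show pr (FreeGroup.of (Sum.inl i)) = 1 by simp [pr], map_one, map_one, map_one]
        exact (QuotientGroup.eq_one_iff _).2 ⟨FreeGroup.of i, by simp [jl]⟩
      · simp [jr, pr]
    have := DFunLike.congr_fun he v
    rw [← QuotientGroup.eq_one_iff]
    change QuotientGroup.mk' A _ = 1
    rw [map_mul, map_inv, mul_inv_eq_one]
    exact this
  let color : G → κ ⊕ κ' := fun x =>
    if h : ∃ n, f n = x then Sum.inl (c h.choose) else Sum.inr (c' (p x))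
  have hcolf : ∀ n, color (f n) = Sum.inl (c n) := by
    intro n
    have h : ∃ n', f n' = f n := ⟨n, rfl⟩
    simp only [color, dif_pos h]
    rw [hf h.choose_spec]
  have hcol1 : color 1 = Sum.inl (c 1) := by rw [← map_one f]; exact hcolf 1
  have hcolr : ∀ x, p x ≠ 1 → color x = Sum.inr (c' (p x)) := by
    intro x hx
    have h : ¬ ∃ n, f n = x := by rintro ⟨n, rfl⟩; exact hx (hpf n)
    simp only [color, dif_neg h]
  have hcoll : ∀ x k, color x = Sum.inl k → ∃ n, f n = x := by
    intro x k hx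
    by_contra h
    rw [hcolr x fun h' => h (hker x h')] at hx
    cases hx
  -- the colour of the image in `Q` can be read off from the colour in `G`
  let out : κ ⊕ κ' → κ' := Sum.elim (fun _ => c' 1) id
  have hout : ∀ x, out (color x) = c' (p x) := by
    intro x
    by_cases hx : p x = 1
    · obtain ⟨n, rfl⟩ := hker x hx
      rw [hcolf, hpf]; rfl
    · rw [hcolr x hx]; rfl
  -- `jl w` acts on the points coloured as elements of `N`, which form a compatible set for `N`
  have goldl : ∀ w, GoldenWord a c w → GoldenWord g color (jl w) := by
    intro w hw X ρ F hF x hx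
    rw [hcol1] at hx ⊢
    let P : X → Prop := fun x => ∃ k, F x = Sum.inl k
    have hP : ∀ i x, P x ↔ P (ρ (Sum.inl i) x) := by
      intro i x
      obtain ⟨y, h1, h2⟩ := hF (Sum.inl i) x
      simp only [P, ← h1, ← h2]
      constructor
      · rintro ⟨k, hk⟩
        obtain ⟨n, rfl⟩ := hcoll _ _ hk
        exact ⟨_, by simp only [g, Sum.elim_inl, ← map_mul]; exact hcolf _⟩
      · rintro ⟨k, hk⟩
        obtain ⟨n, hn⟩ := hcoll _ _ hk
        refine ⟨c ((a i)⁻¹ * n), ?_⟩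
        rw [← hcolf, map_mul, map_inv, hn]; simp [g]
    let ρ' : ι → Equiv.Perm (Subtype P) := fun i => (ρ (Sum.inl i)).subtypePerm (hP i ·|>.symm)
    let F' : Subtype P → κ := fun x => x.2.choose
    have hF' : ∀ x : Subtype P, F x.1 = Sum.inl (F' x) := fun x => x.2.choose_spec
    have hcompat : Compat a c ρ' F' := by
      intro i x
      obtain ⟨y, h1, h2⟩ := hF (Sum.inl i) x.1
      rw [hF' x] at h1
      have h3 := hF' (ρ' i x)
      change F (ρ (Sum.inl i) x) = _ at h3
      rw [h3] at h2
      obtain ⟨n, rfl⟩ := hcoll _ _ h1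
      simp only [g, Sum.elim_inl, ← map_mul, hcolf] at h1 h2
      exact ⟨n, Sum.inl.inj h1, Sum.inl.inj h2⟩
    have hval : ∀ (u : FreeGroup ι) (x : Subtype P),
        (FreeGroup.lift ρ' u x).1 = FreeGroup.lift ρ (jl u) x.1 := by
      intro u
      induction u using FreeGroup.induction_on with
      | C1 => simp
      | of i => intro x; simp [jl, ρ']
      | inv_of i _ =>
        intro x
        simp only [map_inv, jl, FreeGroup.map.of, FreeGroup.lift_apply_of]
        rw [Equiv.Perm.eq_inv_iff_eq]
        change (ρ' i ((ρ' i).symm x)).1 = _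
        rw [Equiv.apply_symm_apply]
      | mul u v hu hv => intro x; simp [hu, hv]
    let x' : Subtype P := ⟨x, _, hx⟩
    have hx' : F' x' = c 1 := Sum.inl.inj ((hF' x').symm.trans hx)
    have := hw _ ρ' F' hcompat x' hx'
    rw [show FreeGroup.lift ρ (jl w) x = (FreeGroup.lift ρ' w x').1 from (hval w x').symm, hF']
    exact fun h => this (Sum.inl.inj h)
  -- forgetting the colours of `N` gives a compatible set for `Q`, on which `jl u` fixes all colours
  have goldr : ∀ u w, GoldenWord b c' w → GoldenWord g color (jl u * jr w) := by
    intro u w hw X ρ F hF x hx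
    rw [hcol1] at hx ⊢
    have hcompat : Compat b c' (fun j => ρ (Sum.inr j)) (fun x => out (F x)) := by
      intro j x
      obtain ⟨y, h1, h2⟩ := hF (Sum.inr j) x
      refine ⟨p y, ?_, ?_⟩
      · dsimp only; rw [← h1, hout]
      · dsimp only; rw [← h2, hout]; simp [g, hβ]
    have h1 : out (F (FreeGroup.lift ρ (jr w) x)) ≠ c' 1 := by
      have := hw X _ _ hcompat x (by rw [hx]; rfl)
      rwa [show FreeGroup.lift (fun j => ρ (Sum.inr j)) w = FreeGroup.lift ρ (jr w) from
        DFunLike.congr_fun (show FreeGroup.lift (fun j => ρ (Sum.inr j)) =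
          (FreeGroup.lift ρ).comp jr by ext j; simp [jr]) w] at this
    have hinl : ∀ i x, out (F (ρ (Sum.inl i) x)) = out (F x) := by
      intro i x
      obtain ⟨y, h1, h2⟩ := hF (Sum.inl i) x
      rw [← h1, ← h2, hout, hout]
      simp [g, hpf]
    have h2 : ∀ (u : FreeGroup ι) (x : X), out (F (FreeGroup.lift ρ (jl u) x)) = out (F x) := by
      intro u
      induction u using FreeGroup.induction_on with
      | C1 => simp
      | of i => intro x; simp [jl, hinl]
      | inv_of i _ =>
        intro x
        have := hinl i ((ρ (Sum.inl i))⁻¹ x)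
        rw [show ρ (Sum.inl i) ((ρ (Sum.inl i))⁻¹ x) = x from
          (ρ (Sum.inl i)).apply_symm_apply x] at this
        simp [jl, this]
      | mul u v hu hv => intro x; simp [hu, hv]
    rw [map_mul, Equiv.Perm.mul_apply]
    intro h
    apply h1
    rw [← h2 u, h]; rfl
  have hrange : Function.Surjective (FreeGroup.lift g) := by
    intro x
    obtain ⟨w, hw⟩ := FreeGroup.lift_surjective_iff_closure_range_eq_top.2 hb (p x)
    obtain ⟨n, hn⟩ := hker (x * (FreeGroup.lift g (jr w))⁻¹) (by
      rw [map_mul, map_inv, hgr, hw, mul_inv_cancel])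
    obtain ⟨u, rfl⟩ := hword n
    exact ⟨jl u * jr w, by rw [map_mul, hgl, hn]; simp⟩
  refine ⟨ι ⊕ ι', κ ⊕ κ', inferInstance, inferInstance, g, color, S,
    FreeGroup.lift_surjective_iff_closure_range_eq_top.1 hrange,
    (hRfin.image _).union (hWfin.image _), ?_, ?_⟩
  · rintro v (⟨r, hr, rfl⟩ | ⟨w, hw, rfl⟩)
    · rw [hgl, hR r hr, map_one]
    · simp only [corr, map_mul, map_inv]
      rw [hU w (hW w hw), mul_inv_cancel]
  · intro v
    have hL : ∀ w, q v = q w → v * w⁻¹ ∈ L := fun w h => by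
      rw [← hq, map_mul, map_inv, h, mul_inv_cancel]
    rcases hgold' (pr v) with h | ⟨w, hw, h⟩
    · have hv : q v ∈ A := by
        have := A.mul_mem (hpr v) (hLQ _ h)
        simpa using this
      obtain ⟨u, hu⟩ := hv
      rcases hgold u with h' | ⟨w, hw, h'⟩
      · left
        rw [← hq, ← hu]
        exact hLN u h'
      · right
        refine ⟨jl w, goldl w hw, hL _ ?_⟩
        have := hLN _ h'
        rw [map_mul, map_mul, map_inv, map_inv, mul_inv_eq_one] at this
        rw [← hu, ← this]; rfl
    · right
      have hv : q v * (q (jr w))⁻¹ ∈ A := by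
        have := A.mul_mem (hpr v) (hLQ _ h)
        simpa [mul_assoc] using this
      obtain ⟨u, hu⟩ := hv
      refine ⟨jl u * jr w, goldr u w hw, hL _ ?_⟩
      rw [map_mul, ← MonoidHom.comp_apply, hu]; simp

/-! ### Maps from groups with the same configurations -/

/-- Every two-sided configuration of the coloured pair `(h, f)` on `K` occurs for `(g, e)` on
`G`. -/
def Simulates {G K ι κ : Type*} [Group G] [Group K] (g : ι → G) (e : G → κ) (h : ι → K)
    (f : K → κ) : Prop :=
  ∀ x, ∃ y, e y = f x ∧ ∀ i, e (g i * y) = f (h i * x) ∧ e (y * g i) = f (x * h i)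

/-- The colouring `c` of `G` refined so that each element of `S` has a colour of its own. -/
noncomputable def isolate {G κ : Type*} (c : G → κ) (S : Set G) (x : G) : κ × Option S :=
  open Classical in (c x, if h : x ∈ S then some ⟨x, h⟩ else none)

theorem isolate_eq {G κ : Type*} (c : G → κ) (S : Set G) {x y : G} (hy : y ∈ S)
    (h : isolate c S x = isolate c S y) : x = y := by
  have h2 := congrArg Prod.snd h
  simp only [isolate, dif_pos hy] at h2
  by_cases hx : x ∈ S
  · rw [dif_pos hx] at h2
    exact congrArg Subtype.val (Option.some.inj h2)
  · rw [dif_neg hx] at h2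
    cases h2

/-- The elements of `G` met while reading the word `L` from right to left. -/
def pathSet {G ι : Type*} [Group G] (g : ι → G) (L : List (ι × Bool)) : Set G :=
  {x | ∃ M, M <:+ L ∧ FreeGroup.lift g (FreeGroup.mk M) = x}

theorem finite_pathSet {G ι : Type*} [Group G] (g : ι → G) (L : List (ι × Bool)) :
    (pathSet g L).Finite := by
  have : {M | M <:+ L}.Finite := by
    refine (List.finite_toSet L.tails).subset fun M hM => ?_
    exact (List.mem_tails M L).2 hM
  exact this.image fun M => FreeGroup.lift g (FreeGroup.mk M)

/-- If the points met along a word have colours of their own in `(G, e)`, then starting from any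
point of `K` coloured as `1`, the word in `h` follows the same colours. -/
theorem Simulates.follow {G K ι κ : Type*} [Group G] [Group K] {g : ι → G} {e : G → κ}
    {h : ι → K} {f : K → κ} (hs : Simulates g e h f) {S : Set G}
    (hS : ∀ s ∈ S, ∀ y, e y = e s → y = s) {x : K} (hx : f x = e 1) (L : List (ι × Bool))
    (hL : pathSet g L ⊆ S) :
    f (FreeGroup.lift h (FreeGroup.mk L) * x) = e (FreeGroup.lift g (FreeGroup.mk L)) := by
  induction L with
  | nil => simpa using hx
  | cons a L ih =>
    have hsub : pathSet g L ⊆ S := by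
      rintro _ ⟨M, hM, rfl⟩
      exact hL ⟨M, hM.trans (List.suffix_cons a L), rfl⟩
    have hz := ih hsub
    have hmem : FreeGroup.lift g (FreeGroup.mk L) ∈ S := hsub ⟨L, List.suffix_rfl, rfl⟩
    obtain ⟨i, ε⟩ := a
    set s := FreeGroup.lift g (FreeGroup.mk L)
    set z := FreeGroup.lift h (FreeGroup.mk L) * x with hzdef
    cases ε with
    | true =>
      obtain ⟨y, h1, h2⟩ := hs z
      rw [hz] at h1
      have hy := hS s hmem y h1
      subst hy
      have := (h2 i).1
      simp only [FreeGroup.lift_mk, List.map_cons, List.prod_cons, cond_true, mul_assoc] at this ⊢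
      simp only [s, z, FreeGroup.lift_mk] at this
      exact this.symm
    | false =>
      obtain ⟨y, h1, h2⟩ := hs ((h i)⁻¹ * z)
      have h3 := (h2 i).1
      rw [mul_inv_cancel_left, hz] at h3
      have hy := hS s hmem _ h3
      rw [← eq_inv_mul_iff_mul_eq] at hy
      rw [hy] at h1
      simp only [FreeGroup.lift_mk, List.map_cons, List.prod_cons, cond_false, mul_assoc]
      simp only [s, z, FreeGroup.lift_mk] at h1
      exact h1.symm

theorem exists_hom_of_ker_le {ι G K : Type*} [Group G] [Group K] (g : ι → G) (h : ι → K)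
    (hh : Subgroup.closure (Set.range h) = ⊤)
    (hk : ∀ v, FreeGroup.lift h v = 1 → FreeGroup.lift g v = 1) :
    ∃ φ : K →* G, ∀ v, φ (FreeGroup.lift h v) = FreeGroup.lift g v := by
  have hsurj := FreeGroup.lift_surjective_iff_closure_range_eq_top.2 hh
  choose s hs using hsurj
  let φ := (FreeGroup.lift h).liftOfRightInverse s hs ⟨FreeGroup.lift g, fun v hv => hk v hv⟩
  refine ⟨φ, fun v => ?_⟩
  exact MonoidHom.liftOfRightInverse_comp_apply _ _ _ _ _

/-- The finitely many elements of `G` to be isolated by a colouring in order that the relators `R`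
and the normality of the class of `1` can be read off from configurations. -/
def controlSet {G ι : Type*} [Group G] (g : ι → G) (R : Set (FreeGroup ι)) : Set G :=
  open Classical in ({1} ∪ Set.range g) ∪
    ((⋃ r ∈ R, pathSet g r.toWord) ∪ ⋃ r ∈ R, pathSet g (r⁻¹).toWord)

theorem finite_controlSet {G ι : Type*} [Group G] [Finite ι] (g : ι → G) {R : Set (FreeGroup ι)}
    (hR : R.Finite) : (controlSet g R).Finite :=
  ((Set.finite_singleton _).union (Set.finite_range _)).union
    ((hR.biUnion fun _ _ => finite_pathSet _ _).union
      (hR.biUnion fun _ _ => finite_pathSet _ _))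

/-- If `e` refines the colouring of a golden presentation of `G` and isolates the control set, then
every group imitating `(g, e)` maps onto `G`, generators to generators.  The class `M` of points
coloured as `1` is a normal subset of `K`, so its stabilizer `T` is a normal subgroup; `T` contains
all relators, and no golden word. -/
theorem IsGoldenPresentation.exists_hom {G K : Type*} [Group G] [Group K] {ι κ : Type} {κ' : Type*}
    {g : ι → G} {c : G → κ} {R : Set (FreeGroup ι)} (hG : IsGoldenPresentation g c R)
    (e : G → κ') (π : κ' → κ) (hπ : ∀ x, π (e x) = c x)
    (hS : ∀ s ∈ controlSet g R, ∀ y, e y = e s → y = s)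
    (h : ι → K) (f : K → κ') (hh : Subgroup.closure (Set.range h) = ⊤)
    (hs : Simulates g e h f) {x₀ : K} (hx₀ : f x₀ = e 1) :
    ∃ φ : K →* G, ∀ v, φ (FreeGroup.lift h v) = FreeGroup.lift g v := by
  classical
  obtain ⟨-, -, hR, hgold⟩ := hG
  set S := controlSet g R with hSdef
  have h1S : (1 : G) ∈ S := Or.inl (Or.inl rfl)
  have hgS : ∀ i, g i ∈ S := fun i => Or.inl (Or.inr ⟨i, rfl⟩)
  -- the class of points coloured as `1` is invariant under conjugation
  have hcg : ∀ i z, f z = e (g i) → f ((h i)⁻¹ * z) = e 1 ∧ f (z * (h i)⁻¹) = e 1 := by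
    intro i z hz
    constructor
    · obtain ⟨y, h1, h2⟩ := hs ((h i)⁻¹ * z)
      have h3 := (h2 i).1
      rw [mul_inv_cancel_left, hz] at h3
      have hy := hS _ (hgS i) _ h3
      rw [mul_eq_left] at hy
      rw [← h1, hy]
    · obtain ⟨y, h1, h2⟩ := hs (z * (h i)⁻¹)
      have h3 := (h2 i).2
      rw [inv_mul_cancel_right, hz] at h3
      have hy := hS _ (hgS i) _ h3
      rw [mul_eq_right] at hy
      rw [← h1, hy]
  have hcg' : ∀ i x, f x = e 1 → f (h i * x) = e (g i) ∧ f (x * h i) = e (g i) := by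
    intro i x hx
    obtain ⟨y, h1, h2⟩ := hs x
    rw [hx] at h1
    obtain rfl := hS _ h1S _ h1
    have := h2 i
    rw [mul_one, one_mul] at this
    exact ⟨this.1.symm, this.2.symm⟩
  have hconj : ∀ k x, f x = e 1 → f (k * x * k⁻¹) = e 1 := by
    intro k
    have hk : k ∈ Subgroup.closure (Set.range h) := by rw [hh]; trivial
    induction hk using Subgroup.closure_induction'' with
    | one => simp
    | mem k hk =>
      obtain ⟨i, rfl⟩ := hk
      intro x hx
      exact (hcg i _ (hcg' i x hx).1).2
    | inv_mem k hk =>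
      obtain ⟨i, rfl⟩ := hk
      intro x hx
      rw [inv_inv, mul_assoc]
      exact (hcg i _ (hcg' i x hx).2).1
    | mul k l _ _ hk hl =>
      intro x hx
      have := hk _ (hl x hx)
      simpa [mul_assoc] using this
  let T : Subgroup K :=
    { carrier := {k | ∀ x, f x = e 1 → f (k * x) = e 1 ∧ f (k⁻¹ * x) = e 1}
      one_mem' := by intro x hx; simp [hx]
      mul_mem' := by
        intro k l hk hl x hx
        rw [mul_inv_rev, mul_assoc, mul_assoc]
        exact ⟨(hk _ (hl x hx).1).1, (hl _ (hk x hx).2).2⟩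
      inv_mem' := by
        intro k hk x hx
        rw [inv_inv]
        exact ⟨(hk x hx).2, (hk x hx).1⟩ }
  have hT : T.Normal := by
    refine ⟨fun n hn k x hx => ?_⟩
    have h0 : f (k⁻¹ * x * k) = e 1 := by simpa using hconj k⁻¹ x hx
    constructor
    · have := hconj k _ (hn _ h0).1
      simpa [mul_assoc] using this
    · have := hconj k _ (hn _ h0).2
      simpa [mul_assoc] using this
  have hRT : ∀ r ∈ R, FreeGroup.lift h r ∈ T := by
    intro r hr x hx
    constructor
    · have := hs.follow hS hx r.toWord fun y hy =>
        Or.inr (Or.inl (Set.mem_biUnion hr (by convert hy)))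
      rwa [FreeGroup.mk_toWord, hR r hr] at this
    · have := hs.follow hS hx (r⁻¹).toWord fun y hy =>
        Or.inr (Or.inr (Set.mem_biUnion hr (by convert hy)))
      rwa [FreeGroup.mk_toWord, map_inv, map_inv, hR r hr, inv_one] at this
  apply exists_hom_of_ker_le g h hh
  intro v hv
  rcases hgold v with hvR | ⟨w, hw, hvw⟩
  · have : Subgroup.normalClosure R ≤ (FreeGroup.lift g).ker :=
      Subgroup.normalClosure_le_normal hR
    exact this hvR
  · exfalso
    have hle : Subgroup.normalClosure R ≤ T.comap (FreeGroup.lift h) :=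
      Subgroup.normalClosure_le_normal hRT
    have hwT := hle hvw
    rw [Subgroup.mem_comap, map_mul, hv, one_mul, map_inv, T.inv_mem_iff] at hwT
    -- `K` acts on itself by translations; the orbit of `x₀` is parametrized by the free group
    have hlift : ∀ u, FreeGroup.lift (fun i => Equiv.mulLeft (FreeGroup.of i)) w u = w * u := by
      intro u
      have : FreeGroup.lift (fun i => Equiv.mulLeft (FreeGroup.of i)) =
          MulAction.toPermHom (FreeGroup ι) (FreeGroup ι) := by
        ext i; simp
      rw [this]; rfl
    refine hw (FreeGroup ι) (fun i => Equiv.mulLeft (FreeGroup.of i))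
      (fun u => π (f (FreeGroup.lift h u * x₀))) ?_ 1 ?_ ?_
    · intro i u
      obtain ⟨y, h1, h2⟩ := hs (FreeGroup.lift h u * x₀)
      refine ⟨y, by rw [← hπ, h1], ?_⟩
      rw [← hπ, (h2 i).1]
      simp [mul_assoc]
    · rw [map_one, one_mul, hx₀, hπ]
    · rw [hlift, mul_one, (hwT x₀ hx₀).1, hπ]

/-! ### Rigidity -/

/-- Configuration equivalence in terms of colourings: a finitely coloured generating tuple of `G` has
a counterpart in `H` with the same configurations.  -/
theorem exists_simulates {G H : Type*} [Group G] [Group H] (heq : ConfigEqT G H)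
    {ι κ : Type*} [Finite ι] [Finite κ] (g : ι → G) (e : G → κ)
    (hg : Subgroup.closure (Set.range g) = ⊤) :
    ∃ (h : ι → H) (f : H → κ), Subgroup.closure (Set.range h) = ⊤ ∧
      Simulates g e h f ∧ Simulates h f g e := by
  obtain ⟨n, ⟨σ⟩⟩ := Finite.exists_equiv_fin ι
  obtain ⟨m, ⟨τ⟩⟩ := Finite.exists_equiv_fin κ
  let E : Fin m → Set G := fun i => {x | τ (e x) = i}
  have hmem : (⟨n, m, TwoSidedConfigSet (g ∘ σ.symm) E⟩ :
      Σ n m : ℕ, Set (TwoSidedConfig n m)) ∈ TwoSidedConfigSets H := by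
    rw [← show TwoSidedConfigSets G = TwoSidedConfigSets H from heq]
    refine ⟨g ∘ σ.symm, E, ?_, fun x => ⟨τ (e x), rfl, fun y hy => hy.symm⟩, rfl⟩
    rw [IsGenerating, σ.symm.surjective.range_comp, hg]
  obtain ⟨h, F, hh, hF, hcon⟩ := hmem
  dsimp only at h F hF hcon
  choose f hf using fun x => (hF x).exists
  have hfu : ∀ x i, x ∈ F i → f x = i := fun x i hi => (hF x).unique (hf x) hi
  refine ⟨h ∘ σ, τ.symm ∘ f, ?_, ?_, ?_⟩
  · rw [σ.surjective.range_comp]; exact hh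
  · intro x
    have : (f x, (fun i => f (h i * x)), fun i => f (x * h i)) ∈ TwoSidedConfigSet h F :=
      ⟨x, hf x, fun i => ⟨hf _, hf _⟩⟩
    rw [← hcon] at this
    obtain ⟨y, hy, hy'⟩ := this
    refine ⟨y, (τ.symm_apply_eq.2 hy.symm).symm, fun i => ?_⟩
    have h1 : τ (e (g (σ.symm (σ i)) * y)) = f (h (σ i) * x) := (hy' (σ i)).1
    have h2 : τ (e (y * g (σ.symm (σ i)))) = f (x * h (σ i)) := (hy' (σ i)).2
    rw [σ.symm_apply_apply] at h1 h2
    exact ⟨(τ.symm_apply_eq.2 h1.symm).symm, (τ.symm_apply_eq.2 h2.symm).symm⟩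
  · intro x
    have : (τ (e x), (fun i => τ (e (g (σ.symm i) * x))), fun i => τ (e (x * g (σ.symm i)))) ∈
        TwoSidedConfigSet (g ∘ σ.symm) E := ⟨x, rfl, fun i => ⟨rfl, rfl⟩⟩
    rw [hcon] at this
    obtain ⟨y, hy, hy'⟩ := this
    refine ⟨y, ?_, fun i => ?_⟩
    · simp [hfu _ _ hy]
    · have h1 := hfu _ _ (hy' (σ i)).1
      have h2 := hfu _ _ (hy' (σ i)).2
      simp [h1, h2]

/-- The maximal condition on subgroups implies the Hopf property: the kernels of the iterates of `ψ`
form an increasing chain. -/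
theorem injective_of_surjective_of_wellFoundedGT {G : Type*} [Group G]
    [WellFoundedGT (Subgroup G)] (ψ : G →* G) (hψ : Function.Surjective ψ) :
    Function.Injective ψ := by
  -- the iterates of `ψ`, as homomorphisms
  obtain ⟨P, hP⟩ : ∃ P : ℕ → (G →* G), ∀ n x, P n x = ψ^[n] x := by
    refine ⟨fun n => Nat.rec (MonoidHom.id G) (fun _ r => ψ.comp r) n, fun n x => ?_⟩
    induction n with
    | zero => rfl
    | succ n ih => rw [Function.iterate_succ_apply', ← ih]; rfl
  let k : ℕ →o Subgroup G := ⟨fun n => (P n).ker, monotone_nat_of_le_succ fun n x hx => by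
    rw [MonoidHom.mem_ker, hP] at hx ⊢
    rw [Function.iterate_succ_apply', hx, map_one]⟩
  obtain ⟨n, hn⟩ := WellFoundedGT.monotone_chain_condition k
  rw [injective_iff_map_eq_one]
  intro x hx
  obtain ⟨y, rfl⟩ := hψ.iterate n x
  have h1 : y ∈ k (n + 1) := by
    change P (n + 1) y = 1
    rw [hP, Function.iterate_succ_apply', hx]
  rw [← hn (n + 1) (Nat.le_succ n)] at h1
  rw [← hP]; exact h1

/-- The rigidity theorem for groups with a golden presentation and the maximal condition on
subgroups. -/
theorem nonempty_mulEquiv_of_golden {G H : Type*} [Group G] [Group H] (hG : Golden G)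
    [WellFoundedGT (Subgroup G)] (heq : ConfigEqT G H) : Nonempty (G ≃* H) := by
  classical
  obtain ⟨ι, κ, _, _, g, c, R, hpres⟩ := hG
  have : Finite (controlSet g R) := finite_controlSet g hpres.finite
  let e := isolate c (controlSet g R)
  have he : ∀ s ∈ controlSet g R, ∀ y, e y = e s → y = s := fun s hs y => isolate_eq c _ hs
  obtain ⟨h, f, hh, hs, hs'⟩ := exists_simulates heq g e hpres.closure_eq
  obtain ⟨x₀, hx₀, -⟩ := hs' 1
  obtain ⟨φ, hφ⟩ := hpres.exists_hom e Prod.fst (fun _ => rfl) he h f hh hs hx₀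
  have hgsurj := FreeGroup.lift_surjective_iff_closure_range_eq_top.2 hpres.closure_eq
  have hhsurj := FreeGroup.lift_surjective_iff_closure_range_eq_top.2 hh
  have hφg : ∀ i, φ (h i) = g i := fun i => by simpa using hφ (FreeGroup.of i)
  have hφsurj : Function.Surjective φ := fun x => by
    obtain ⟨v, rfl⟩ := hgsurj x
    exact ⟨_, hφ v⟩
  have hφinj : Function.Injective φ := by
    rw [injective_iff_map_eq_one]
    intro z hz
    obtain ⟨w, rfl⟩ := hhsurj z
    rw [hφ] at hz
    -- pull the colouring of `G` back to `H`, and isolate the points met along the word `w`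
    let S : Set H := {1} ∪ pathSet h w.toWord
    have : Finite S := (Set.finite_singleton _).union (finite_pathSet _ _)
    let e' := isolate (e ∘ φ) S
    have he' : ∀ s ∈ S, ∀ y, e' y = e' s → y = s := fun s hs y => isolate_eq _ _ hs
    obtain ⟨g', f', hg', ht, ht'⟩ := exists_simulates (Eq.symm heq : ConfigEqT H G) h e' hh
    obtain ⟨x₁, hx₁, -⟩ := ht' 1
    have hsim : Simulates g e g' (Prod.fst ∘ f') := by
      intro x
      obtain ⟨y, h1, h2⟩ := ht x
      refine ⟨φ y, congrArg Prod.fst h1, fun i => ⟨?_, ?_⟩⟩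
      · rw [← hφg, ← map_mul]; exact congrArg Prod.fst (h2 i).1
      · rw [← hφg, ← map_mul]; exact congrArg Prod.fst (h2 i).2
    have hx₁' : (Prod.fst ∘ f') x₁ = e 1 := by
      rw [Function.comp_apply, hx₁, ← map_one φ]; rfl
    obtain ⟨ψ, hψ⟩ := hpres.exists_hom e Prod.fst (fun _ => rfl) he g' _ hg' hsim hx₁'
    have hψinj := injective_of_surjective_of_wellFoundedGT ψ fun x => by
      obtain ⟨v, rfl⟩ := hgsurj x
      exact ⟨_, hψ v⟩
    have hw : FreeGroup.lift g' w = 1 := hψinj (by rw [hψ, hz, map_one])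
    have hfol := ht.follow he' hx₁ w.toWord Set.subset_union_right
    rw [FreeGroup.mk_toWord, hw, one_mul, hx₁] at hfol
    exact he' 1 (Or.inl rfl) _ hfol.symm
  exact ⟨(MulEquiv.ofBijective φ ⟨hφinj, hφsurj⟩).symm⟩

/-! ### Polycyclic groups and FC-groups -/

/-- `G` has a golden presentation and satisfies the maximal condition on subgroups (encoded as
well-foundedness of `>`).  Both properties pass to extensions. -/
def GoldenMax (G : Type*) [Group G] : Prop :=
  Golden G ∧ WellFoundedGT (Subgroup G)

/-- A subgroup `S` of `G` is determined, within a chain, by its trace on `N` and its image in `Q`. -/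
theorem wellFoundedGT_subgroup_of_extension {N G Q : Type*} [Group N] [Group G] [Group Q]
    (f : N →* G) (p : G →* Q) (hfp : f.range = p.ker)
    [WellFoundedGT (Subgroup N)] [WellFoundedGT (Subgroup Q)] :
    WellFoundedGT (Subgroup G) := by
  have hmono : StrictMono fun S : Subgroup G => (S.comap f, S.map p) := by
    intro S T hST
    have hle : (S.comap f, S.map p) ≤ (T.comap f, T.map p) :=
      ⟨Subgroup.comap_mono hST.le, Subgroup.map_mono hST.le⟩
    refine lt_of_le_of_ne hle fun heq => hST.not_ge fun t ht => ?_
    obtain ⟨h1, h2⟩ := Prod.mk.inj heq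
    obtain ⟨s, hs, hst⟩ : p t ∈ S.map p := h2 ▸ Subgroup.mem_map_of_mem p ht
    have hker : s⁻¹ * t ∈ p.ker := by rw [MonoidHom.mem_ker, map_mul, map_inv, hst, inv_mul_cancel]
    rw [← hfp] at hker
    obtain ⟨n, hn⟩ := hker
    have hnT : n ∈ T.comap f := by
      rw [Subgroup.mem_comap, hn]
      exact mul_mem (inv_mem (hST.le hs)) ht
    rw [← h1, Subgroup.mem_comap, hn] at hnT
    have := mul_mem hs hnT
    rwa [mul_inv_cancel_left] at this
  exact hmono.wellFoundedGT

theorem GoldenMax.extension {N G Q : Type*} [Group N] [Group G] [Group Q]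
    (f : N →* G) (p : G →* Q) (hf : Function.Injective f) (hp : Function.Surjective p)
    (hfp : f.range = p.ker) (hN : GoldenMax N) (hQ : GoldenMax Q) : GoldenMax G := by
  obtain ⟨hN1, hN2⟩ := hN
  obtain ⟨hQ1, hQ2⟩ := hQ
  exact ⟨golden_of_extension f p hf hp hfp hN1 hQ1, wellFoundedGT_subgroup_of_extension f p hfp⟩

theorem GoldenMax.of_finite (G : Type*) [Group G] [Finite G] : GoldenMax G :=
  ⟨golden_of_finite G, inferInstance⟩

/-- Subgroups of a cyclic group embed into the ideals of the noetherian ring `ℤ`. -/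
theorem GoldenMax.of_cyclic (G : Type*) [Group G] [IsCyclic G] : GoldenMax G := by
  refine ⟨golden_of_cyclic G, ?_⟩
  obtain ⟨s, hs⟩ := IsCyclic.exists_generator (α := G)
  have hsurj : Function.Surjective (zpowersHom G s) := fun x => by
    obtain ⟨k, hk⟩ := Subgroup.mem_zpowers_iff.1 (hs x)
    exact ⟨Multiplicative.ofAdd k, by simpa using hk⟩
  have hmono : StrictMono fun S : Subgroup G =>
      AddSubgroup.toIntSubmodule (Subgroup.toAddSubgroup' (S.comap (zpowersHom G s))) := by
    refine ((OrderIso.strictMono _).comp (OrderIso.strictMono _)).comp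
      (Monotone.strictMono_of_injective (fun S T h => Subgroup.comap_mono h)
        (Subgroup.comap_injective hsurj))
  exact hmono.wellFoundedGT

theorem GoldenMax.of_equiv {G H : Type*} [Group G] [Group H] (e : G ≃* H) (hG : GoldenMax G) :
    GoldenMax H := by
  refine GoldenMax.extension (e : G →* H) (1 : H →* Unit) e.injective (fun _ => ⟨1, rfl⟩) ?_ hG
    (GoldenMax.of_finite Unit)
  rw [MonoidHom.ker_one, MonoidHom.range_eq_top]
  exact e.surjective

/-- Induction along the polycyclic series. -/
theorem GoldenMax.of_polycyclic {G : Type*} [Group G] (hG : IsPolycyclic G) : GoldenMax G := by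
  obtain ⟨k, c, h0, h1, hstep⟩ := hG
  have key : ∀ i : Fin (k + 1), GoldenMax (c i) := by
    intro i
    induction i using Fin.induction with
    | zero => rw [h0]; exact GoldenMax.of_finite _
    | succ i ih =>
      obtain ⟨hle, hn, hcyc⟩ := hstep i
      refine GoldenMax.extension (Subgroup.inclusion hle)
        (QuotientGroup.mk' ((c i.castSucc).subgroupOf (c i.succ)))
        (Subgroup.inclusion_injective hle) (QuotientGroup.mk'_surjective _) ?_ ih
        (GoldenMax.of_cyclic _)
      rw [Subgroup.inclusion_range, QuotientGroup.ker_mk']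
  have := key (Fin.last k)
  rw [h1] at this
  exact this.of_equiv Subgroup.topEquiv

/-- Induction on the number of generators, dividing out one of them at a time. -/
theorem GoldenMax.of_commGroup {n : ℕ} : ∀ {A : Type*} [CommGroup A] (g : Fin n → A),
    Subgroup.closure (Set.range g) = ⊤ → GoldenMax A := by
  induction n with
  | zero =>
    intro A _ g hg
    rw [Set.range_eq_empty, Subgroup.closure_empty] at hg
    have : Subsingleton A := (Subgroup.subsingleton_iff).1 (subsingleton_of_bot_eq_top hg)
    exact GoldenMax.of_finite A
  | succ n ih =>
    intro A _ g hg
    let Z := Subgroup.zpowers (g 0)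
    let q := QuotientGroup.mk' Z
    refine GoldenMax.extension Z.subtype q Z.subtype_injective (QuotientGroup.mk'_surjective Z)
      (by rw [Subgroup.range_subtype, QuotientGroup.ker_mk']) (GoldenMax.of_cyclic _)
      (ih (fun i => q (g i.succ)) ?_)
    have h1 : (Subgroup.closure (Set.range g)).map q = ⊤ := by
      rw [hg, ← MonoidHom.range_eq_map, MonoidHom.range_eq_top]
      exact QuotientGroup.mk'_surjective Z
    rw [MonoidHom.map_closure] at h1
    rw [eq_top_iff, ← h1, Subgroup.closure_le]
    rintro _ ⟨_, ⟨i, rfl⟩, rfl⟩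
    refine Fin.cases ?_ (fun i => ?_) i
    · have : q (g 0) = 1 := (QuotientGroup.eq_one_iff _).2 (Subgroup.mem_zpowers _)
      rw [this]; exact one_mem _
    · exact Subgroup.subset_closure ⟨i, rfl⟩

/-- The centre is the intersection of the centralizers of finitely many generators, each of finite
index because the conjugacy class of the generator is finite. -/
theorem finiteIndex_center_of_FC {G : Type*} [Group G] [hfg : Group.FG G] (hG : IsFCGroup G) :
    (Subgroup.center G).FiniteIndex := by
  obtain ⟨S, hS⟩ := Group.fg_def.1 hfg
  rw [Subgroup.center_eq_infi' hS]
  refine Subgroup.finiteIndex_iInf fun g => ?_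
  have := (hG g).to_subtype
  have hfin : Finite (G ⧸ Subgroup.centralizer {(g : G)}) := by
    refine Finite.of_injective (β := {h | IsConj (g : G) h})
      (fun q => ⟨q.out * g * q.out⁻¹, isConj_iff.2 ⟨q.out, rfl⟩⟩) fun a b hab => ?_
    have h : a.out * (g : G) * a.out⁻¹ = b.out * g * b.out⁻¹ := congrArg Subtype.val hab
    rw [← QuotientGroup.out_eq' a, ← QuotientGroup.out_eq' b, QuotientGroup.eq,
      Subgroup.mem_centralizer_singleton_iff]
    calc a.out⁻¹ * b.out * (g : G) = a.out⁻¹ * (b.out * g * b.out⁻¹) * b.out := by group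
      _ = a.out⁻¹ * (a.out * g * a.out⁻¹) * b.out := by rw [h]
      _ = g * (a.out⁻¹ * b.out) := by group
  exact Subgroup.finiteIndex_of_finite_quotient

/-- The centre is a finitely generated abelian group of finite index. -/
theorem GoldenMax.of_FC {G : Type*} [Group G] (hfg : Group.FG G) (hG : IsFCGroup G) :
    GoldenMax G := by
  have := finiteIndex_center_of_FC hG
  have hZ : Group.FG (Subgroup.center G) := inferInstance
  obtain ⟨S, hS⟩ := Group.fg_def.1 hZ
  have hcl : Subgroup.closure (Set.range fun i => ((S.equivFin.symm i : S) : Subgroup.center G))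
      = ⊤ := by
    rw [← hS]
    congr 1
    ext x
    constructor
    · rintro ⟨i, rfl⟩; exact (S.equivFin.symm i).2
    · intro hx; exact ⟨S.equivFin ⟨x, hx⟩, by simp⟩
  let _ : CommGroup (Subgroup.center G) :=
    { (inferInstance : Group (Subgroup.center G)) with
      mul_comm := fun a b => Subtype.ext ((Subgroup.mem_center_iff.1 b.2 a)) }
  have hcomm : GoldenMax (Subgroup.center G) := GoldenMax.of_commGroup (A := Subgroup.center G) _ hcl
  exact GoldenMax.extension (Subgroup.center G).subtype (QuotientGroup.mk' (Subgroup.center G))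
    (Subgroup.subtype_injective _) (QuotientGroup.mk'_surjective _)
    (by rw [Subgroup.range_subtype, QuotientGroup.ker_mk']) hcomm
    (GoldenMax.of_finite _)

/-- A finitely generated group that is polycyclic or FC is isomorphic to any
finitely generated group two-sided configuration equivalent to it. -/
theorem isomorphism_of_configEqT_of_polycyclic_or_FC {G : Type*} {H : Type*}
    [Group G] [Group H] (hGfg : Group.FG G) (hHfg : Group.FG H)
    (hG : IsPolycyclic G ∨ IsFCGroup G) (heq : ConfigEqT G H) :
    Nonempty (G ≃* H) := by
  have h : GoldenMax G := hG.elim GoldenMax.of_polycyclic (GoldenMax.of_FC hGfg)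
  have := h.2
  exact nonempty_mulEquiv_of_golden h.1 heq
end
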